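/- arXiv:1801.09590 — 3 statements merged into one kernel-verified Lean document; each statement's English description precedes it below -/
import Mathlib

section
/- Let L be an even positive-definite lattice of rank 17 which has exactly 480 vectors r with (r,r) = 2 and which has no vector s ∈ L^∨ with (s,s) = 1/2 and 2s ∈ L. Then for no positive integer β₀ does there exist a weakly holomorphic Jacobi form of weight 0 and index L having 2-reflective singular support with multiplicity β₀ and satisfying f(0,0) ≥ 17. -/
/-!
The obstruction is visible in the second Taylor coefficients of a Jacobi form `φ` at `z = 0`.
Writing `φ₂(τ, z)` for the coefficient of `u²` in `φ(τ, u z)`, the function `φ₂(·, z)` transforms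
with weight `2` up to an error proportional to `(z, z) φ(τ, 0)` (`WeakJacobiForm.deriv_ray_modular`).
Hence `(w, w) φ₂(τ, z) - (z, z) φ₂(τ, w)` is modular of weight `2` for all rational `z`, `w`. Its
`q`-expansion weighs `f(m, l)` by `Q(l) = (l, z)² (w, w) - (l, w)² (z, z)`, up to a constant.

For a 2-reflective `φ`, the only nonzero `f(m, l)` with `m ≤ 0` and `l ≠ 0` are `f(0, r) = β₀` for
the roots `r`, because vectors `s` of norm `1/2` are excluded (`TwoReflective.coef_support`).
As `Q(0) = 0`, the modular form is holomorphic at the cusp with constant term proportional to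
`β₀ ∑_r Q(r)`. There are no nonzero modular forms of weight `2` and level one, so `∑_r Q(r) = 0`
(`TwoReflective.roots_two_design`): the form `∑_r (r, z)²` is proportional to `(z, z)`.

Comparing traces, the proportionality factor is `2 · 480 / 17` (`EvenLattice.two_design`). At a root
`r₀` the form takes the integral value `∑_r (r, r₀)²`, which would have to be `1920 / 17`, and `17`
does not divide `1920`.
-/


noncomputable section

open Matrix Complex

/-- The complex upper half-plane, as a subset of `ℂ`. -/
def UH : Set ℂ := {τ : ℂ | 0 < τ.im}

/-- An even positive-definite lattice of rank `n`, presented through its Gram matrix: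
the underlying free `ℤ`-module is `Fin n → ℤ`, the bilinear form is
`(x, y) = x ⬝ᵥ (G *ᵥ y)`. -/
structure EvenLattice (n : ℕ) where
  /-- the Gram matrix -/
  G : Matrix (Fin n) (Fin n) ℤ
  symm : G.IsSymm
  even_diag : ∀ i, 2 ∣ G i i
  posdef : ∀ x : Fin n → ℤ, x ≠ 0 → 0 < x ⬝ᵥ (G *ᵥ x)

namespace EvenLattice

variable {n : ℕ}

/-- The bilinear form, extended `ℚ`-bilinearly to `L ⊗ ℚ = Fin n → ℚ`. -/
def bq (L : EvenLattice n) (x y : Fin n → ℚ) : ℚ :=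
  x ⬝ᵥ ((L.G.map (Int.cast : ℤ → ℚ)) *ᵥ y)

/-- The bilinear form, extended `ℂ`-bilinearly to `L ⊗ ℂ = Fin n → ℂ`. -/
def bc (L : EvenLattice n) (x y : Fin n → ℂ) : ℂ :=
  x ⬝ᵥ ((L.G.map (Int.cast : ℤ → ℂ)) *ᵥ y)

/-- `x ∈ L ⊗ ℚ` is a lattice vector, i.e. has integral coordinates. -/
def IsIntVec (L : EvenLattice n) (x : Fin n → ℚ) : Prop := ∀ i, ∃ m : ℤ, x i = m

/-- `x` lies in the dual lattice `L^∨`. -/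
def InDual (L : EvenLattice n) (x : Fin n → ℚ) : Prop :=
  ∀ l : Fin n → ℚ, L.IsIntVec l → ∃ m : ℤ, L.bq x l = m

/-- `L` is unimodular, i.e. `L^∨ = L`. -/
def Unimodular (L : EvenLattice n) : Prop :=
  ∀ x : Fin n → ℚ, L.InDual x → L.IsIntVec x

/-- The number `|R(L)|` of `2`-roots of `L`, i.e. of vectors `r ∈ L` with `(r,r) = 2`. -/
def rootCount (L : EvenLattice n) : ℕ :=
  Nat.card {r : Fin n → ℚ // L.IsIntVec r ∧ L.bq r r = 2}

end EvenLattice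

/-- A weakly holomorphic Jacobi form of weight `k` and index `L`, recorded together with the
system of its Fourier coefficients `coef`. -/
structure WeakJacobiForm {n : ℕ} (L : EvenLattice n) (k : ℤ) where
  /-- the underlying function on `ℍ × (L ⊗ ℂ)` -/
  toFun : ℂ → (Fin n → ℂ) → ℂ
  /-- the Fourier coefficients `f(n, l)` -/
  coef : ℤ → (Fin n → ℚ) → ℂ
  holo : DifferentiableOn ℂ (fun p : ℂ × (Fin n → ℂ) => toFun p.1 p.2)
    (UH ×ˢ (Set.univ : Set (Fin n → ℂ)))
  modular : ∀ a b c d : ℤ, a * d - b * c = 1 → ∀ τ ∈ UH, ∀ z : Fin n → ℂ,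
    toFun (((a : ℂ) * τ + b) / ((c : ℂ) * τ + d)) (fun i => z i / ((c : ℂ) * τ + d)) =
      ((c : ℂ) * τ + d) ^ k *
        Complex.exp ((Real.pi : ℂ) * Complex.I * c * L.bc z z / ((c : ℂ) * τ + d)) * toFun τ z
  elliptic : ∀ x y : Fin n → ℚ, L.IsIntVec x → L.IsIntVec y → ∀ τ ∈ UH, ∀ z : Fin n → ℂ,
    toFun τ (fun i => z i + (x i : ℂ) * τ + (y i : ℂ)) =
      Complex.exp (-((Real.pi : ℂ) * Complex.I) *
        ((L.bq x x : ℂ) * τ + 2 * L.bc (fun i => (x i : ℂ)) z)) * toFun τ z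
  coef_bdd : ∃ n₁ : ℤ, ∀ m : ℤ, ∀ l : Fin n → ℚ, m < n₁ → coef m l = 0
  coef_dual : ∀ (m : ℤ) (l : Fin n → ℚ), coef m l ≠ 0 → L.InDual l
  coef_finite : ∀ m : ℤ, {l : Fin n → ℚ | coef m l ≠ 0}.Finite
  expansion : ∀ τ ∈ UH, ∀ z : Fin n → ℂ,
    HasSum (fun p : ℤ × (Fin n → ℚ) =>
      coef p.1 p.2 * Complex.exp (2 * (Real.pi : ℂ) * Complex.I *
        ((p.1 : ℂ) * τ + L.bc (fun i => (p.2 i : ℂ)) z))) (toFun τ z)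

/-- `φ` (a weakly holomorphic Jacobi form of weight `0` and index `L`) has 2-reflective
singular support with multiplicity `β₀`: its Fourier coefficients satisfy `f(n,l) = 0` whenever
`2n − (l,l) < 0`, except that `f(n,l) = β₀` whenever `2n − (l,l) = −2` and `l ∈ L`, while
`f(n,l)` may be an arbitrary integer whenever `2n − (l,l) = −1/2` and `2l ∈ L`. -/
def TwoReflective {n : ℕ} {L : EvenLattice n} (φ : WeakJacobiForm L 0) (β₀ : ℤ) : Prop :=
  (∀ (m : ℤ) (l : Fin n → ℚ), 2 * (m : ℚ) - L.bq l l = -2 → L.IsIntVec l →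
      φ.coef m l = β₀) ∧
  (∀ (m : ℤ) (l : Fin n → ℚ), 2 * (m : ℚ) - L.bq l l = -(1 / 2) →
      L.IsIntVec (fun i => 2 * l i) → ∃ t : ℤ, φ.coef m l = t) ∧
  (∀ (m : ℤ) (l : Fin n → ℚ), 2 * (m : ℚ) - L.bq l l < 0 →
      ¬(2 * (m : ℚ) - L.bq l l = -2 ∧ L.IsIntVec l) →
      ¬(2 * (m : ℚ) - L.bq l l = -(1 / 2) ∧ L.IsIntVec (fun i => 2 * l i)) →
      φ.coef m l = 0)

open ComplexOrder

/-! ### Weight two -/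

open scoped ModularForm MatrixGroups

/-- There are no nonzero modular forms of weight `2` and level one, so a weight `2` modular
`q`-series without negative exponents has constant term `0`. The series is indexed by an arbitrary
type, several terms being allowed to share an exponent. -/
lemma weight_two_constant_term {ι : Type*} (a : ι → ℂ) (m : ι → ℤ)
    (hm : ∀ i, a i ≠ 0 → 0 ≤ m i)
    (hs : ∀ τ ∈ UH, Summable fun i => a i * cexp (2 * Real.pi * I * (m i * τ)))
    (hmod : ∀ a' b c d : ℤ, a' * d - b * c = 1 → ∀ τ ∈ UH,
      ∑' i, a i * cexp (2 * Real.pi * I * (m i * (((a' : ℂ) * τ + b) / ((c : ℂ) * τ + d)))) =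
        ((c : ℂ) * τ + d) ^ 2 * ∑' i, a i * cexp (2 * Real.pi * I * (m i * τ))) :
    ∑' i, (if m i = 0 then a i else 0) = 0 := by
  have hnorm : ∀ i, ∀ τ : ℂ, ‖a i * cexp (2 * Real.pi * I * (m i * τ))‖ =
      ‖a i‖ * Real.exp (-(2 * Real.pi * m i * τ.im)) := by
    intro i τ
    rw [norm_mul, Complex.norm_exp]
    congr 2
    simp
    ring
  have hle : ∀ i, ∀ (y : ℝ) (τ : ℂ), y ≤ τ.im → ‖a i * cexp (2 * Real.pi * I * (m i * τ))‖ ≤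
      ‖a i * cexp (2 * Real.pi * I * (m i * (y * I)))‖ := by
    intro i y τ h
    rw [hnorm, hnorm]
    by_cases ha : a i = 0
    · simp [ha]
    have h0 : (0 : ℝ) ≤ m i := by exact_mod_cast hm i ha
    gcongr
    simpa using h
  have hUH : ∀ y : ℝ, 0 < y → ((y : ℂ) * I) ∈ UH := fun y hy => by simpa [UH] using hy
  set g : ℂ → ℂ := fun τ => ∑' i, a i * cexp (2 * Real.pi * I * (m i * τ)) with hg
  have hdiff : DifferentiableOn ℂ g {z : ℂ | 0 < z.im} := by
    intro τ hτ
    have hτ' : 0 < τ.im := hτ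
    have ho : IsOpen {z : ℂ | τ.im / 2 < z.im} := isOpen_lt continuous_const Complex.continuous_im
    have := differentiableOn_tsum_of_summable_norm
      (F := fun i τ => a i * cexp (2 * Real.pi * I * (m i * τ)))
      (hs _ (hUH (τ.im / 2) (by positivity))).norm
      (fun i => by fun_prop) ho (fun i w hw => hle i _ w (le_of_lt hw))
    exact (this.differentiableAt (ho.mem_nhds (show τ.im / 2 < τ.im by linarith))).differentiableWithinAt
  have hslash : ∀ γ : Matrix.SpecialLinearGroup (Fin 2) ℤ,
      (fun z : UpperHalfPlane => g z) ∣[(2 : ℤ)] γ = fun z : UpperHalfPlane => g z := by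
    intro γ
    ext z
    have hdet := γ.det_coe
    rw [Matrix.det_fin_two] at hdet
    have h := hmod (γ 0 0) (γ 0 1) (γ 1 0) (γ 1 1) hdet z z.im_pos
    rw [ModularForm.SL_slash_apply]
    have h2 : ((γ • z : UpperHalfPlane) : ℂ) =
        ((γ 0 0 : ℂ) * z + (γ 0 1 : ℂ)) / ((γ 1 0 : ℂ) * z + (γ 1 1 : ℂ)) := by
      rw [UpperHalfPlane.coe_specialLinearGroup_apply]; simp
    have h3 : UpperHalfPlane.denom γ z = (γ 1 0 : ℂ) * z + (γ 1 1 : ℂ) := by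
      simp [UpperHalfPlane.denom]
    have h4 : (γ 1 0 : ℂ) * z + (γ 1 1 : ℂ) ≠ 0 := by
      rw [← h3]; exact UpperHalfPlane.denom_ne_zero _ _
    rw [h2, h3]
    simp only [hg]
    rw [h, _root_.zpow_neg, zpow_ofNat]
    field_simp
  let f : ModularForm (Matrix.SpecialLinearGroup.mapGL ℝ : Matrix.SpecialLinearGroup (Fin 2) ℤ →* _).range 2 :=
    { toFun := fun z => g z
      slash_action_eq' := by
        rintro _ ⟨γ, rfl⟩
        exact hslash γ
      holo' := by
        refine UpperHalfPlane.mdifferentiable_iff.mpr (hdiff.congr fun z hz => ?_)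
        simp [UpperHalfPlane.ofComplex_apply_of_im_pos hz]
      bdd_at_cusps' := by
        intro c hc
        rw [Subgroup.IsArithmetic.isCusp_iff_isCusp_SL2Z] at hc
        rw [OnePoint.isBoundedAt_iff_forall_SL2Z hc]
        intro γ _
        rw [hslash γ, UpperHalfPlane.isBoundedAtImInfty_iff]
        refine ⟨∑' i, ‖a i * cexp (2 * Real.pi * I * (m i * ((1 : ℝ) * I)))‖, 1, fun z hz => ?_⟩
        have hb := (hs _ (hUH 1 one_pos)).norm
        exact tsum_of_norm_bounded hb.hasSum fun i => hle i 1 z hz }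
  have hf0 : f = 0 := rank_zero_iff_forall_zero.mp ModularForm.levelOne_weight_two_rank_zero f
  have hg0 : ∀ y : ℝ, 0 < y → g (y * I) = 0 := fun y hy =>
    congrArg (fun F : ModularForm _ 2 => F ⟨y * I, hUH y hy⟩) hf0
  have hlim : Filter.Tendsto (fun y : ℝ => g (y * I)) Filter.atTop
      (nhds (∑' i, (if m i = 0 then a i else 0))) := by
    refine tendsto_tsum_of_dominated_convergence (hs _ (hUH 1 one_pos)).norm (fun i => ?_) ?_
    · split_ifs with h
      · simp [h]
      by_cases ha : a i = 0
      · simp [ha]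
      have h0 : (0 : ℝ) < m i := by
        exact_mod_cast lt_of_le_of_ne (hm i ha) (Ne.symm h)
      rw [tendsto_zero_iff_norm_tendsto_zero]
      simp only [hnorm]
      rw [← mul_zero ‖a i‖]
      refine Filter.Tendsto.const_mul _ (Real.tendsto_exp_neg_atTop_nhds_zero.comp ?_)
      simp only [Complex.mul_im, Complex.I_im, Complex.I_re, Complex.ofReal_re, mul_one, mul_zero,
        add_zero]
      exact Filter.tendsto_id.const_mul_atTop (by positivity)
    · filter_upwards [Filter.eventually_ge_atTop 1] with y hy i
      exact hle i 1 _ (by simpa using hy)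
  refine tendsto_nhds_unique hlim (tendsto_const_nhds.congr' ?_)
  filter_upwards [Filter.eventually_gt_atTop 0] with y hy
  exact (hg0 y hy).symm

/-! ### Exponential series -/

/-- An everywhere convergent series `∑ w_i exp(a_i u √-1)` with real frequencies may be
differentiated termwise: on a bounded set it is dominated by the sum of its absolute values at two
points of the imaginary axis. -/
lemma exp_series_deriv {ι : Type*} (w : ι → ℂ) (a : ι → ℝ)
    (hs : ∀ u : ℂ, Summable fun i => w i * cexp (I * a i * u)) :
    Differentiable ℂ (fun u => ∑' i, w i * cexp (I * a i * u)) ∧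
    ∀ u, HasSum (fun i => (w i * (I * a i)) * cexp (I * a i * u))
      (deriv (fun u => ∑' i, w i * cexp (I * a i * u)) u) := by
  have hnorm : ∀ i, ∀ u : ℂ, ‖w i * cexp (I * a i * u)‖ = ‖w i‖ * Real.exp (-(a i * u.im)) := by
    intro i u
    rw [norm_mul, Complex.norm_exp]
    simp
  have hle : ∀ (R : ℝ) i, ∀ u ∈ Metric.ball (0 : ℂ) R, ‖w i * cexp (I * a i * u)‖ ≤
      ‖w i * cexp (I * a i * (R * I))‖ + ‖w i * cexp (I * a i * (-R * I))‖ := by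
    intro R i u hu
    rw [hnorm, hnorm, hnorm, ← mul_add]
    gcongr
    have hu : |u.im| ≤ R := (Complex.abs_im_le_norm u).trans (by simpa using hu : ‖u‖ < R).le
    obtain ⟨h1, h2⟩ := abs_le.mp hu
    rcases le_total 0 (a i) with h | h
    · refine le_trans (Real.exp_le_exp.mpr ?_) (le_add_of_nonneg_left (Real.exp_pos _).le)
      simp
      nlinarith
    · refine le_trans (Real.exp_le_exp.mpr ?_) (le_add_of_nonneg_right (Real.exp_pos _).le)
      simp
      nlinarith
  have hu : ∀ R : ℝ, Summable fun i =>
      ‖w i * cexp (I * a i * (R * I))‖ + ‖w i * cexp (I * a i * (-R * I))‖ :=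
    fun R => (hs _).norm.add (hs _).norm
  have hmem : ∀ u : ℂ, u ∈ Metric.ball (0 : ℂ) (‖u‖ + 1) := fun u => by simp
  refine ⟨fun u => ?_, fun u => ?_⟩
  · exact (differentiableOn_tsum_of_summable_norm (hu (‖u‖ + 1)) (fun i => by fun_prop)
      Metric.isOpen_ball (hle _)).differentiableAt (Metric.isOpen_ball.mem_nhds (hmem u))
  · have := hasSum_deriv_of_summable_norm (hu (‖u‖ + 1)) (fun i => by fun_prop)
      Metric.isOpen_ball (hle _) (hmem u)
    have key : ∀ i, deriv (fun u => w i * cexp (I * a i * u)) u =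
        (w i * (I * a i)) * cexp (I * a i * u) := by
      intro i
      have h1 : HasDerivAt (fun u => I * a i * u) (I * a i) u := by
        simpa using (hasDerivAt_id u).const_mul (I * (a i : ℂ))
      rw [(h1.cexp.const_mul (w i)).deriv]
      ring
    simpa only [key] using this

/-- The second Taylor coefficient at `0` of both sides of `F (s t) = exp (κ t²) H t`. -/
lemma second_deriv_relation (F H : ℂ → ℂ) (hF : Differentiable ℂ F) (hH : Differentiable ℂ H)
    (s κ : ℂ) (h : ∀ t, F (s * t) = cexp (κ * t ^ 2) * H t) :
    s ^ 2 * deriv (deriv F) 0 = 2 * κ * H 0 + deriv (deriv H) 0 := by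
  have hF' : Differentiable ℂ (deriv F) := hF.deriv
  have hH' : Differentiable ℂ (deriv H) := hH.deriv
  have hs : ∀ t, HasDerivAt (fun t : ℂ => s * t) s t := fun t => by
    simpa using (hasDerivAt_id t).const_mul s
  have hk : ∀ t, HasDerivAt (fun t : ℂ => cexp (κ * t ^ 2)) (cexp (κ * t ^ 2) * (2 * κ * t)) t := by
    intro t
    refine ((hasDerivAt_pow 2 t).const_mul κ).cexp.congr_deriv ?_
    push_cast
    ring
  have h1 : ∀ t, deriv F (s * t) * s =
      cexp (κ * t ^ 2) * (2 * κ * t) * H t + cexp (κ * t ^ 2) * deriv H t := by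
    intro t
    have e1 := (hF (s * t)).hasDerivAt.comp t (hs t)
    have e2 := (hk t).mul (hH t).hasDerivAt
    rw [show (F ∘ fun t => s * t) = (fun t => cexp (κ * t ^ 2)) * H from funext h] at e1
    exact e1.unique e2
  have e1 := ((hF' (s * 0)).hasDerivAt.comp 0 (hs 0)).mul_const s
  have e2 := (((hk 0).mul ((hasDerivAt_id (0 : ℂ)).const_mul (2 * κ))).mul
    (hH 0).hasDerivAt).add ((hk 0).mul (hH' 0).hasDerivAt)
  have e3 := e1.unique (e2.congr_of_eventuallyEq (Filter.Eventually.of_forall h1))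
  simp at e3
  linear_combination e3

/-! ### The lattice -/

namespace EvenLattice

variable {n : ℕ} (L : EvenLattice n)

lemma bc_ratCast (l z : Fin n → ℚ) :
    L.bc (fun i => (l i : ℂ)) (fun i => (z i : ℂ)) = (L.bq l z : ℂ) := by
  simp [bc, bq, dotProduct, mulVec]

lemma bc_mul_right (x y : Fin n → ℂ) (u : ℂ) :
    L.bc x (fun i => u * y i) = u * L.bc x y := by
  rw [show (fun i => u * y i) = u • y from rfl]
  simp [bc, mulVec_smul]

lemma bc_mul_left (x y : Fin n → ℂ) (u : ℂ) :
    L.bc (fun i => u * x i) y = u * L.bc x y := by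
  rw [show (fun i => u * x i) = u • x from rfl]
  simp [bc]

lemma bq_add_right (x y z : Fin n → ℚ) : L.bq x (y + z) = L.bq x y + L.bq x z := by
  simp [bq, mulVec_add]

lemma bq_add_left (x y z : Fin n → ℚ) : L.bq (x + y) z = L.bq x z + L.bq y z := by
  simp [bq]

lemma bq_comm (x y : Fin n → ℚ) : L.bq x y = L.bq y x := by
  have h : (L.G.map (Int.cast : ℤ → ℚ))ᵀ = L.G.map (Int.cast : ℤ → ℚ) := by
    rw [← transpose_map, L.symm]
  rw [bq, bq, dotProduct_mulVec, dotProduct_comm, ← mulVec_transpose, h]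

lemma bq_zero_left (y : Fin n → ℚ) : L.bq 0 y = 0 := by simp [bq]

lemma bq_intCast (x y : Fin n → ℤ) :
    L.bq (fun i => (x i : ℚ)) (fun i => (y i : ℚ)) = ((x ⬝ᵥ (L.G *ᵥ y) : ℤ) : ℚ) := by
  simp [bq, dotProduct, mulVec]

lemma exists_int_of_isIntVec {x y : Fin n → ℚ} (hx : L.IsIntVec x) (hy : L.IsIntVec y) :
    ∃ m : ℤ, L.bq x y = m := by
  choose a ha using hx
  choose b hb using hy
  exact ⟨_, by rw [funext ha, funext hb]; exact L.bq_intCast a b⟩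

/-- Positive definiteness passes from `L` to `L ⊗ ℚ` by clearing denominators. -/
lemma bq_self_pos {x : Fin n → ℚ} (hx : x ≠ 0) : 0 < L.bq x x := by
  set d : ℕ := ∏ i, (x i).den with hd
  have hd0 : (d : ℚ) ≠ 0 := by
    rw [hd]
    exact_mod_cast Finset.prod_ne_zero_iff.mpr fun i _ => (x i).den_nz
  have hint : ∀ i, ∃ m : ℤ, (d : ℚ) * x i = m := by
    intro i
    obtain ⟨k, hk⟩ := Finset.dvd_prod_of_mem (fun i => (x i).den) (Finset.mem_univ i)
    refine ⟨(x i).num * k, ?_⟩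
    rw [hd, hk]
    push_cast
    rw [mul_right_comm, Rat.den_mul_eq_num]
  choose y hy using hint
  have hy0 : y ≠ 0 := by
    rintro rfl
    refine hx (funext fun i => ?_)
    simpa [hd0] using hy i
  have h1 : L.bq ((d : ℚ) • x) ((d : ℚ) • x) = (d : ℚ) ^ 2 * L.bq x x := by
    simp [bq, mulVec_smul]
    ring
  have h2 : L.bq ((d : ℚ) • x) ((d : ℚ) • x) = ((y ⬝ᵥ (L.G *ᵥ y) : ℤ) : ℚ) := by
    rw [show (d : ℚ) • x = fun i => (y i : ℚ) from funext hy, bq_intCast]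
  have h3 : (0 : ℚ) < (d : ℚ) ^ 2 * L.bq x x := by
    rw [← h1, h2]
    exact_mod_cast L.posdef y hy0
  exact pos_of_mul_pos_right h3 (by positivity)

lemma bq_self_nonneg (x : Fin n → ℚ) : 0 ≤ L.bq x x := by
  rcases eq_or_ne x 0 with rfl | h
  · simp [bq]
  · exact (L.bq_self_pos h).le

/-- The dual basis of the standard basis: `(x, w_i) = x_i`. -/
lemma exists_dual_basis : ∃ w : Fin n → Fin n → ℚ, ∀ x i, L.bq x (w i) = x i := by
  have hdet : IsUnit (L.G.map (Int.cast : ℤ → ℚ)).det := by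
    rw [isUnit_iff_ne_zero]
    intro h
    obtain ⟨v, hv, hv0⟩ := exists_mulVec_eq_zero_iff.mpr h
    have := L.bq_self_pos hv
    rw [bq, hv0] at this
    simp at this
  refine ⟨fun i => (L.G.map (Int.cast : ℤ → ℚ))⁻¹ *ᵥ Pi.single i 1, fun x i => ?_⟩
  rw [bq, mulVec_mulVec, mul_nonsing_inv _ hdet, one_mulVec, dotProduct_single, mul_one]

lemma sum_mul_bq_single (x y : Fin n → ℚ) : ∑ i, x i * L.bq y (Pi.single i 1) = L.bq y x := by
  simp only [bq, dotProduct_mulVec, dotProduct_single, mul_one]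
  simp [dotProduct, mul_comm]

/-- A finite set `R` of vectors of norm `2` whose quadratic form `∑ (r, z)²` is proportional to
`(z, z)` has proportionality factor `2|R| / n`. Evaluating the form at a vector `r₀` of norm `2`
therefore gives `4|R| / n`. -/
lemma two_design (R : Finset (Fin n → ℚ)) (hR : ∀ r ∈ R, L.bq r r = 2) (r₀ : Fin n → ℚ)
    (h₀ : L.bq r₀ r₀ = 2)
    (h : ∀ z w, ∑ r ∈ R, (L.bq r z ^ 2 * L.bq w w - L.bq r w ^ 2 * L.bq z z) = 0) :
    4 * (R.card : ℚ) = n * ∑ r ∈ R, L.bq r r₀ ^ 2 := by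
  set N := ∑ r ∈ R, L.bq r r₀ ^ 2 with hN
  have hS : ∀ z, 2 * ∑ r ∈ R, L.bq r z ^ 2 = N * L.bq z z := by
    intro z
    have := h z r₀
    rw [Finset.sum_sub_distrib, ← Finset.sum_mul, ← Finset.sum_mul, h₀] at this
    linarith
  have hpol : ∀ z w, 2 * ∑ r ∈ R, L.bq r z * L.bq r w = N * L.bq z w := by
    intro z w
    have e : ∑ r ∈ R, L.bq r (z + w) ^ 2 = ∑ r ∈ R, L.bq r z ^ 2 +
        2 * ∑ r ∈ R, L.bq r z * L.bq r w + ∑ r ∈ R, L.bq r w ^ 2 := by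
      rw [Finset.mul_sum, ← Finset.sum_add_distrib, ← Finset.sum_add_distrib]
      refine Finset.sum_congr rfl fun r _ => ?_
      rw [bq_add_right]
      ring
    have e1 := hS (z + w)
    rw [e, bq_add_right, bq_add_left, bq_add_left, L.bq_comm w z] at e1
    linarith [hS z, hS w]
  obtain ⟨w, hw⟩ := L.exists_dual_basis
  have ht : ∑ i, 2 * ∑ r ∈ R, L.bq r (Pi.single i 1) * L.bq r (w i) =
      ∑ i, N * L.bq (Pi.single i 1) (w i) := Finset.sum_congr rfl fun i _ => hpol _ _
  rw [← Finset.mul_sum, Finset.sum_comm] at ht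
  simp only [hw, Pi.single_eq_same, mul_one, Finset.sum_const, Finset.card_univ,
    Fintype.card_fin, nsmul_eq_mul] at ht
  have ht' : ∑ r ∈ R, ∑ i, L.bq r (Pi.single i 1) * r i = ∑ r ∈ R, 2 := by
    refine Finset.sum_congr rfl fun r hr => ?_
    rw [← hR r hr, ← L.sum_mul_bq_single r r]
    exact Finset.sum_congr rfl fun i _ => mul_comm _ _
  rw [ht'] at ht
  simp at ht
  linarith

end EvenLattice

/-! ### Second Taylor coefficients of Jacobi forms -/

namespace WeakJacobiForm

variable {n : ℕ} {L : EvenLattice n} {k : ℤ} (φ : WeakJacobiForm L k)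

/-- The restriction `u ↦ φ(τ, u z)` of a Jacobi form to the complex line through a rational
vector `z`. -/
def ray (τ : ℂ) (z : Fin n → ℚ) (u : ℂ) : ℂ := φ.toFun τ (fun i => u * (z i : ℂ))

lemma hasSum_ray {τ : ℂ} (hτ : τ ∈ UH) (z : Fin n → ℚ) (u : ℂ) :
    HasSum (fun p : ℤ × (Fin n → ℚ) => (φ.coef p.1 p.2 * cexp (2 * Real.pi * I * (p.1 * τ))) *
      cexp (I * ((2 * Real.pi * (L.bq p.2 z : ℝ) : ℝ) : ℂ) * u)) (φ.ray τ z u) := by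
  refine (φ.expansion τ hτ (fun i => u * (z i : ℂ))).congr_fun fun p => ?_
  rw [L.bc_mul_right, L.bc_ratCast, mul_assoc, ← Complex.exp_add]
  congr 2
  push_cast
  ring

/-- Termwise second derivative of the Fourier expansion along `z`, as a `q`-series. -/
lemma ray_twice {τ : ℂ} (hτ : τ ∈ UH) (z : Fin n → ℚ) :
    Differentiable ℂ (φ.ray τ z) ∧
    HasSum (fun p : ℤ × (Fin n → ℚ) => (φ.coef p.1 p.2 * (L.bq p.2 z : ℂ) ^ 2) *
      cexp (2 * Real.pi * I * (p.1 * τ)))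
      (-(4 * (Real.pi : ℂ) ^ 2)⁻¹ * deriv (deriv (φ.ray τ z)) 0) := by
  have h0 : φ.ray τ z = fun u => ∑' p : ℤ × (Fin n → ℚ),
      (φ.coef p.1 p.2 * cexp (2 * Real.pi * I * (p.1 * τ))) *
      cexp (I * ((2 * Real.pi * (L.bq p.2 z : ℝ) : ℝ) : ℂ) * u) :=
    funext fun u => (φ.hasSum_ray hτ z u).tsum_eq.symm
  have h1 := exp_series_deriv _ _ fun u => (φ.hasSum_ray hτ z u).summable
  rw [← h0] at h1
  obtain ⟨hd, hs⟩ := h1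
  refine ⟨hd, ?_⟩
  have h2 := (exp_series_deriv _ _ fun u => (hs u).summable).2 0
  rw [← funext fun u => (hs u).tsum_eq.symm] at h2
  refine (h2.mul_left (-(4 * (Real.pi : ℂ) ^ 2)⁻¹)).congr_fun fun p => ?_
  have hpi : (Real.pi : ℂ) ≠ 0 := by exact_mod_cast Real.pi_ne_zero
  rw [mul_zero, Complex.exp_zero]
  push_cast
  field_simp
  rw [I_sq]
  ring

/-- The transformation law of the second Taylor coefficient of a weight `0` Jacobi form. The
failure to be modular of weight `2` depends on `z` only through `(z, z)`. -/
lemma deriv_ray_modular (φ : WeakJacobiForm L 0) {a b c d : ℤ} (h : a * d - b * c = 1) {τ : ℂ}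
    (hτ : τ ∈ UH) (hτ' : ((a : ℂ) * τ + b) / ((c : ℂ) * τ + d) ∈ UH)
    (hj : (c : ℂ) * τ + d ≠ 0) (z : Fin n → ℚ) :
    deriv (deriv (φ.ray (((a : ℂ) * τ + b) / ((c : ℂ) * τ + d)) z)) 0 =
      ((c : ℂ) * τ + d) ^ 2 * (deriv (deriv (φ.ray τ z)) 0 +
        2 * (Real.pi * I * c / ((c : ℂ) * τ + d)) * φ.toFun τ 0 * L.bq z z) := by
  have hrel := second_deriv_relation _ _ (φ.ray_twice hτ' z).1 (φ.ray_twice hτ z).1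
    ((c : ℂ) * τ + d)⁻¹ (Real.pi * I * c * L.bq z z / ((c : ℂ) * τ + d)) (by
      intro t
      have := φ.modular a b c d h τ hτ (fun i => t * (z i : ℂ))
      rw [L.bc_mul_right, L.bc_mul_left, L.bc_ratCast, zpow_zero, one_mul] at this
      unfold ray
      rw [show (fun i => ((c : ℂ) * τ + d)⁻¹ * t * (z i : ℂ)) =
        fun i => t * (z i : ℂ) / ((c : ℂ) * τ + d) from funext fun i => by ring, this]
      congr 2
      ring)
  have h0 : φ.ray τ z 0 = φ.toFun τ 0 := by
    unfold ray
    congr 1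
    ext i
    simp
  rw [h0] at hrel
  field_simp at hrel ⊢
  linear_combination hrel

end WeakJacobiForm

lemma moebius_mem_UH {a b c d : ℤ} (h : a * d - b * c = 1) {τ : ℂ} (hτ : τ ∈ UH) :
    (c : ℂ) * τ + d ≠ 0 ∧ ((a : ℂ) * τ + b) / ((c : ℂ) * τ + d) ∈ UH := by
  obtain ⟨γ, rfl, rfl, rfl, rfl⟩ : ∃ γ : SL(2, ℤ), γ 0 0 = a ∧ γ 0 1 = b ∧ γ 1 0 = c ∧ γ 1 1 = d :=
    ⟨⟨!![a, b; c, d], by simp [det_fin_two, h]⟩, rfl, rfl, rfl, rfl⟩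
  let t : UpperHalfPlane := ⟨τ, hτ⟩
  have h1 : UpperHalfPlane.denom γ t ≠ 0 := UpperHalfPlane.denom_ne_zero _ t
  have h2 := (γ • t).im_pos
  have h3 := UpperHalfPlane.coe_specialLinearGroup_apply γ t
  rw [UpperHalfPlane.im, h3] at h2
  exact ⟨by simpa [UpperHalfPlane.denom] using h1, by simpa [UH] using h2⟩

/-! ### The contradiction -/

namespace TwoReflective

variable {n : ℕ} {L : EvenLattice n} {φ : WeakJacobiForm L 0} {β₀ : ℤ}

/-- A nonzero coefficient `f(m, l)` with `m ≤ 0` has `l = 0`, or `m = 0` and `l` a root. -/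
lemma coef_support (hφ : TwoReflective φ β₀)
    (hnos : ¬∃ s : Fin n → ℚ, L.InDual s ∧ L.bq s s = 1 / 2 ∧ L.IsIntVec (fun i => 2 * s i))
    {m : ℤ} {l : Fin n → ℚ} (hm : m ≤ 0) (hc : φ.coef m l ≠ 0) (hl : l ≠ 0) :
    m = 0 ∧ L.IsIntVec l ∧ L.bq l l = 2 := by
  have hpos := L.bq_self_pos hl
  have hm' : (m : ℚ) ≤ 0 := by exact_mod_cast hm
  by_cases h1 : 2 * (m : ℚ) - L.bq l l = -2 ∧ L.IsIntVec l
  · have h2 : -1 < m := by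
      have : (-1 : ℚ) < m := by linarith [h1.1]
      exact_mod_cast this
    obtain rfl : m = 0 := by omega
    refine ⟨rfl, h1.2, ?_⟩
    have := h1.1
    push_cast at this
    linarith
  · by_cases h3 : 2 * (m : ℚ) - L.bq l l = -(1 / 2) ∧ L.IsIntVec (fun i => 2 * l i)
    · have h2 : -1 < m := by
        have : (-1 : ℚ) < m := by linarith [h3.1]
        exact_mod_cast this
      obtain rfl : m = 0 := by omega
      refine absurd ⟨l, φ.coef_dual _ _ hc, ?_, h3.2⟩ hnos
      have := h3.1
      push_cast at this
      linarith
    · exact absurd (hφ.2.2 m l (by linarith) h1 h3) hc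

/-- The weight `2` combination `(w, w) φ₂(τ, z) - (z, z) φ₂(τ, w)` of second Taylor coefficients
is a holomorphic modular form, hence has constant term `0`. -/
lemma roots_two_design (hφ : TwoReflective φ β₀) (hβ : 0 < β₀)
    (hnos : ¬∃ s : Fin n → ℚ, L.InDual s ∧ L.bq s s = 1 / 2 ∧ L.IsIntVec (fun i => 2 * s i))
    (R : Finset (Fin n → ℚ)) (hR : ∀ r, r ∈ R ↔ L.IsIntVec r ∧ L.bq r r = 2)
    (z w : Fin n → ℚ) :
    ∑ r ∈ R, (L.bq r z ^ 2 * L.bq w w - L.bq r w ^ 2 * L.bq z z) = 0 := by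
  set Q : (Fin n → ℚ) → ℚ := fun l => L.bq l z ^ 2 * L.bq w w - L.bq l w ^ 2 * L.bq z z with hQ
  have hQ0 : Q 0 = 0 := by simp [hQ, EvenLattice.bq_zero_left]
  have hser : ∀ τ ∈ UH, HasSum (fun p : ℤ × (Fin n → ℚ) => (φ.coef p.1 p.2 * (Q p.2 : ℂ)) *
      cexp (2 * Real.pi * I * (p.1 * τ)))
      (-(4 * (Real.pi : ℂ) ^ 2)⁻¹ * (deriv (deriv (φ.ray τ z)) 0 * L.bq w w -
        deriv (deriv (φ.ray τ w)) 0 * L.bq z z)) := by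
    intro τ hτ
    have h := ((φ.ray_twice hτ z).2.mul_right (L.bq w w : ℂ)).sub
      ((φ.ray_twice hτ w).2.mul_right (L.bq z z : ℂ))
    rw [mul_sub, ← mul_assoc, ← mul_assoc]
    refine h.congr_fun fun p => ?_
    simp only [hQ]
    push_cast
    ring
  have hconst := weight_two_constant_term
    (fun p : ℤ × (Fin n → ℚ) => φ.coef p.1 p.2 * (Q p.2 : ℂ)) (fun p => p.1)
    (by
      intro p hp
      by_contra hneg
      have hl : p.2 ≠ 0 := by
        intro h0
        simp [h0, hQ0] at hp
      have := hφ.coef_support hnos (by omega) (left_ne_zero_of_mul hp) hl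
      omega)
    (fun τ hτ => (hser τ hτ).summable)
    (by
      intro a b c d h τ hτ
      obtain ⟨hj, hτ'⟩ := moebius_mem_UH h hτ
      rw [(hser _ hτ').tsum_eq, (hser τ hτ).tsum_eq, φ.deriv_ray_modular h hτ hτ' hj,
        φ.deriv_ray_modular h hτ hτ' hj]
      ring)
  rw [tsum_eq_sum (s := R.map ⟨fun r => ((0 : ℤ), r), Prod.mk_right_injective 0⟩) ?_] at hconst
  · rw [Finset.sum_map] at hconst
    have hval : ∀ r ∈ R, φ.coef 0 r = β₀ := fun r hr => by
      obtain ⟨h1, h2⟩ := (hR r).mp hr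
      exact hφ.1 0 r (by rw [h2]; norm_num) h1
    have h : (β₀ : ℂ) * ((∑ r ∈ R, Q r : ℚ) : ℂ) = 0 := by
      rw [← hconst]
      push_cast
      rw [Finset.mul_sum]
      refine Finset.sum_congr rfl fun r hr => ?_
      simp [hval r hr]
    rcases mul_eq_zero.mp h with h | h
    · exact absurd (by exact_mod_cast h) hβ.ne'
    · exact_mod_cast h
  · rintro ⟨m, l⟩ hml
    simp only [ite_eq_right_iff]
    rintro rfl
    by_contra hne
    have hl : l ≠ 0 := by
      rintro rfl
      simp [hQ0] at hne
    have := hφ.coef_support hnos le_rfl (left_ne_zero_of_mul hne) hl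
    exact hml (Finset.mem_map.mpr ⟨l, (hR l).mpr this.2, rfl⟩)

end TwoReflective

/-- the Jacobi-form core of Looijenga's theorem: if `L` is an even
positive-definite lattice of rank `17` with exactly `480` roots and no vector `s ∈ L^∨`
with `(s,s) = 1/2` and `2s ∈ L`, then for no positive integer `β₀` does there exist a
weakly holomorphic Jacobi form of weight `0` and index `L` with 2-reflective singular
support with multiplicity `β₀` and `f(0,0) ≥ 17`. -/
theorem looijenga_jacobi_core (L : EvenLattice 17)
    (hroots : L.rootCount = 480)
    (hnos : ¬∃ s : Fin 17 → ℚ, L.InDual s ∧ L.bq s s = 1 / 2 ∧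
      L.IsIntVec (fun i => 2 * s i)) :
    ∀ β₀ : ℤ, 0 < β₀ →
      ¬∃ φ : WeakJacobiForm L 0, TwoReflective φ β₀ ∧ (17 : ℂ) ≤ φ.coef 0 0 := by
  rintro β₀ hβ ⟨φ, hφ, -⟩
  unfold EvenLattice.rootCount at hroots
  -- A nonzero `Nat.card` certifies finiteness.
  have hfin : Finite {r : Fin 17 → ℚ // L.IsIntVec r ∧ L.bq r r = 2} :=
    Nat.finite_of_card_ne_zero (by omega)
  have hfin' : {r : Fin 17 → ℚ | L.IsIntVec r ∧ L.bq r r = 2}.Finite := hfin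
  set R := hfin'.toFinset with hRdef
  have hR : ∀ r, r ∈ R ↔ L.IsIntVec r ∧ L.bq r r = 2 := fun r => by simp [hRdef]
  have hcard : R.card = 480 := by
    rw [← hroots, hRdef, ← Set.ncard_eq_toFinset_card _ hfin']
    rfl
  obtain ⟨r₀, hr₀⟩ : R.Nonempty := Finset.card_pos.mp (by omega)
  have key := L.two_design R (fun r hr => ((hR r).mp hr).2) r₀ ((hR r₀).mp hr₀).2
    (hφ.roots_two_design hβ hnos R hR)
  have hint : ∀ r ∈ R, ∃ m : ℤ, L.bq r r₀ = m := fun r hr =>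
    L.exists_int_of_isIntVec ((hR r).mp hr).1 ((hR r₀).mp hr₀).1
  choose! f hf using hint
  rw [Finset.sum_congr rfl fun r hr => by rw [hf r hr], hcard] at key
  have hkey : 4 * 480 = 17 * ∑ r ∈ R, f r ^ 2 := by exact_mod_cast key
  omega
end
end

section
/- Let L be an even positive-definite lattice of even rank n₀ and let φ be a holomorphic Jacobi form of weight n₀/2 and index L whose Fourier coefficients satisfy f(n,l) = 0 whenever 2n ≠ (l,l) or l ∉ L, and with f(0,0) ≠ 0. Then φ(τ,z) = f(0,0)·Σ_{l∈L} q^{(l,l)/2} ζ^l and L is unimodular (L^∨ = L). -/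
/-!
Write `a(l)` for the coefficient of `q^{(l,l)/2} ζ^l`. By the support hypothesis
`φ(τ,z) = ∑_{l ∈ L} a(l) q^{(l,l)/2} ζ^l`, and for a fixed `τ` the coefficients `a(l)` are
determined by the function of `z`: since the form is nondegenerate this is uniqueness of
absolutely convergent Fourier series on the torus (`fourier_coeff_eq_zero`,
`EvenLattice.thetaTerm_unique`). The translation `z ↦ z + xτ` shifts the index `l` by `x`, so the
elliptic law gives `a(l - x) = a(l)` for all `x ∈ L` (`WeakJacobiForm.diagCoef_const`); hence `a`
is constant, equal to `f(0,0)`, and `φ` is `f(0,0)` times the theta series.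

For unimodularity no Poisson summation is needed. As only `l ∈ L` occur, `φ(τ,·)` is periodic under
`L^∨` (`WeakJacobiForm.periodic_dual`). Conjugating the translation by `y ∈ L^∨` with
`τ ↦ -1/τ` at the fixed point `τ = i` gives
`φ(i,z) = exp(2πi (y,z) - π (y,y)) φ(i, z + iy)`. The two values of `φ` are unchanged under
`z ↦ z + u` with `u ∈ L^∨`, while the exponential is multiplied by `exp(2πi (y,u))`. As `φ(i,·)` is
not identically zero, `(y,u) ∈ ℤ` for all `u ∈ L^∨`. Taking `u` in the basis dual to the standard
basis of `L` shows that the coordinates of `y` are integers.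
-/

noncomputable section

open Matrix Complex

/-! ### Uniqueness of Fourier series -/

/-- An absolutely convergent Fourier series on the `n`-torus vanishing identically has all
coefficients zero. -/
theorem fourier_coeff_eq_zero {n : ℕ} (b : (Fin n → ℤ) → ℂ) (hb : Summable fun l => ‖b l‖)
    (h : ∀ w : Fin n → ℝ, HasSum (fun l => b l *
      Complex.exp (2 * (Real.pi : ℂ) * Complex.I * ∑ i, (l i : ℂ) * (w i : ℂ))) 0) :
    ∀ l, b l = 0 := by
  -- Normalised Haar measure, as in the `L²` theory of `UnitAddTorus`.
  let _ : MeasureTheory.MeasureSpace UnitAddCircle := ⟨AddCircle.haarAddCircle⟩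
  have : MeasureTheory.IsProbabilityMeasure
      (MeasureTheory.volume : MeasureTheory.Measure UnitAddCircle) :=
    inferInstanceAs (MeasureTheory.IsProbabilityMeasure AddCircle.haarAddCircle)
  have hs : Summable fun l : Fin n → ℤ => b l • UnitAddTorus.mFourier l := by
    refine Summable.of_norm ?_
    simpa [norm_smul, UnitAddTorus.mFourier_norm] using hb
  have h0 : HasSum (fun l : Fin n → ℤ => b l • UnitAddTorus.mFourier l) 0 := by
    obtain ⟨F, hF⟩ := hs
    have : F = 0 := by
      ext x
      obtain ⟨w, rfl⟩ : ∃ w : Fin n → ℝ, (fun i => (w i : UnitAddCircle)) = x := by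
        choose w hw using fun i => QuotientAddGroup.mk_surjective (x i)
        exact ⟨w, funext hw⟩
      have h1 := (ContinuousMap.evalCLM ℂ (fun i => (w i : UnitAddCircle))).hasSum hF
      have h2 := h w
      refine h1.unique (h2.congr_fun ?_)
      intro l
      simp [UnitAddTorus.mFourier, Finset.mul_sum, Complex.exp_sum, mul_assoc]
    rwa [this] at hF
  have h1 := (ContinuousMap.toLp (E := ℂ) 2
    (MeasureTheory.volume : MeasureTheory.Measure (UnitAddTorus (Fin n))) ℂ).hasSum h0
  intro l
  have h2 := (innerSL ℂ (UnitAddTorus.mFourierLp 2 l)).hasSum h1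
  have ho := orthonormal_iff_ite.1 (UnitAddTorus.orthonormal_mFourier (d := Fin n)) l
  have h3 := h2.unique (hasSum_ite_eq l (b l) |>.congr_fun ?_)
  · simpa using h3.symm
  · intro m
    have := ho m
    simp only [map_smul, innerSL_apply_apply, smul_eq_mul]
    erw [this]
    by_cases hm : l = m <;> simp [hm, eq_comm]

namespace EvenLattice

variable {n : ℕ} (L : EvenLattice n)

/-! ### The bilinear form and theta series -/

theorem bc_add_left (x y z : Fin n → ℂ) : L.bc (x + y) z = L.bc x z + L.bc y z := by
  simp [bc, add_dotProduct]

theorem bc_add_right (x y z : Fin n → ℂ) : L.bc x (y + z) = L.bc x y + L.bc x z := by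
  simp [bc, mulVec_add, dotProduct_add]

theorem bc_smul_left (c : ℂ) (x y : Fin n → ℂ) : L.bc (c • x) y = c * L.bc x y := by
  simp [bc]

theorem bc_smul_right (c : ℂ) (x y : Fin n → ℂ) : L.bc x (c • y) = c * L.bc x y := by
  simp [bc, mulVec_smul]

theorem bc_comm (x y : Fin n → ℂ) : L.bc x y = L.bc y x := by
  have : (L.G.map (Int.cast : ℤ → ℂ))ᵀ = L.G.map (Int.cast : ℤ → ℂ) := by
    rw [← transpose_map, L.symm]
  rw [bc, bc, dotProduct_mulVec, dotProduct_comm, ← mulVec_transpose, this]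

theorem bc_cast (x y : Fin n → ℚ) :
    L.bc (fun i => (x i : ℂ)) (fun i => (y i : ℂ)) = (L.bq x y : ℂ) := by
  simp [bc, bq, dotProduct, mulVec]

theorem det_ne_zero : (L.G.map (Int.cast : ℤ → ℂ)).det ≠ 0 := by
  intro h
  have h1 : L.G.det = 0 := by
    have : ((L.G.det : ℤ) : ℂ) = 0 := by
      rw [← h]; exact (Int.castRingHom ℂ).map_det L.G
    exact_mod_cast this
  obtain ⟨v, hv, hv0⟩ := exists_mulVec_eq_zero_iff.2 h1
  have := L.posdef v hv
  simp [hv0] at this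

/-- The form on `L ⊗ ℂ` is nondegenerate: every tuple of coordinates `w` is represented by
pairing against a vector. -/
theorem exists_bc_eq (w : Fin n → ℂ) : ∃ u : Fin n → ℂ, ∀ x, L.bc x u = ∑ i, x i * w i := by
  refine ⟨(L.G.map (Int.cast : ℤ → ℂ))⁻¹ *ᵥ w, fun x => ?_⟩
  rw [bc, mulVec_mulVec, mul_nonsing_inv _ (isUnit_iff_ne_zero.2 L.det_ne_zero), one_mulVec]
  rfl

/-- The integer `⌊(l,l)/2⌋`; it equals `(l,l)/2` whenever the latter is integral. -/
def halfNorm (l : Fin n → ℤ) : ℤ := ⌊L.bq (fun i => (l i : ℚ)) (fun i => (l i : ℚ)) / 2⌋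

/-- The term `q^{(l,l)/2} ζ^l` of the theta series of `L`. -/
def thetaTerm (τ : ℂ) (z : Fin n → ℂ) (l : Fin n → ℤ) : ℂ :=
  Complex.exp (2 * (Real.pi : ℂ) * Complex.I *
    (((L.bq (fun i => (l i : ℚ)) (fun i => (l i : ℚ)) / 2 : ℚ) : ℂ) * τ +
      L.bc (fun i => (l i : ℂ)) z))

theorem thetaTerm_eq (τ : ℂ) (z : Fin n → ℂ) (l : Fin n → ℤ) :
    L.thetaTerm τ z l = Complex.exp (2 * (Real.pi : ℂ) * Complex.I *
      (L.bc (fun i => (l i : ℂ)) (fun i => (l i : ℂ)) / 2 * τ + L.bc (fun i => (l i : ℂ)) z)) := by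
  have := L.bc_cast (fun i => (l i : ℚ)) (fun i => (l i : ℚ))
  simp only [Rat.cast_intCast] at this
  rw [thetaTerm, this]
  push_cast
  rfl

theorem thetaTerm_mul (τ : ℂ) (z : Fin n → ℂ) (l : Fin n → ℤ) :
    L.thetaTerm τ z l = L.thetaTerm τ 0 l *
      Complex.exp (2 * (Real.pi : ℂ) * Complex.I * L.bc (fun i => (l i : ℂ)) z) := by
  have h : L.bc (fun i => (l i : ℂ)) 0 = 0 := by simp [bc]
  rw [thetaTerm, thetaTerm, ← Complex.exp_add, h]
  congr 1
  ring

/-- Translating `z` by `xτ` shifts the summation index of the theta series by `x`, up to the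
elliptic automorphy factor. -/
theorem thetaTerm_shift (τ : ℂ) (z : Fin n → ℂ) (l x : Fin n → ℤ) :
    L.thetaTerm τ (fun i => z i + (x i : ℂ) * τ) l *
      Complex.exp ((Real.pi : ℂ) * Complex.I * (L.bc (fun i => (x i : ℂ)) (fun i => (x i : ℂ)) * τ
        + 2 * L.bc (fun i => (x i : ℂ)) z)) = L.thetaTerm τ z (l + x) := by
  have e1 : (fun i => z i + (x i : ℂ) * τ) = z + τ • (fun i => (x i : ℂ)) := by
    ext i; simp [mul_comm]
  have e2 : (fun i => (((l + x) i : ℤ) : ℂ)) = (fun i => (l i : ℂ)) + (fun i => (x i : ℂ)) := by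
    ext i; simp
  rw [thetaTerm_eq, thetaTerm_eq, ← Complex.exp_add, e1, e2]
  simp only [bc_add_left, bc_add_right, bc_smul_right]
  rw [L.bc_comm (fun i => (x i : ℂ)) (fun i => (l i : ℂ))]
  ring_nf

/-- For a fixed `τ`, a combination `∑ a(l) q^{(l,l)/2} ζ^l` vanishing for all `z` has all `a(l)`
equal to zero. -/
theorem thetaTerm_unique (τ : ℂ) (a : (Fin n → ℤ) → ℂ)
    (h : ∀ z, HasSum (fun l => a l * L.thetaTerm τ z l) 0) : ∀ l, a l = 0 := by
  have key := fourier_coeff_eq_zero (fun l => a l * L.thetaTerm τ 0 l) (h 0).summable.norm ?_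
  · intro l
    exact (mul_eq_zero.1 (key l)).resolve_right (Complex.exp_ne_zero _)
  · intro w
    obtain ⟨u, hu⟩ := L.exists_bc_eq (fun i => (w i : ℂ))
    refine (h u).congr_fun fun l => ?_
    rw [L.thetaTerm_mul τ u, hu, mul_assoc]

end EvenLattice

namespace WeakJacobiForm

variable {n : ℕ} {L : EvenLattice n} {k : ℤ} (φ : WeakJacobiForm L k)

/-! ### Jacobi forms supported on `2n = (l,l)` -/

/-- The coefficient of `q^{(l,l)/2} ζ^l` for `l ∈ L`; the exponent of `q` is encoded as
`⌊(l,l)/2⌋`, so that evenness of the form need not be invoked. -/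
def diagCoef (l : Fin n → ℤ) : ℂ := φ.coef (L.halfNorm l) (fun i => (l i : ℚ))

/-- Under the support condition the Fourier expansion runs over `L` alone. -/
theorem hasSum_diag
    (hsupp : ∀ (m : ℤ) (l : Fin n → ℚ), (2 * (m : ℚ) ≠ L.bq l l ∨ ¬L.IsIntVec l) →
      φ.coef m l = 0) {τ : ℂ} (hτ : τ ∈ UH) (z : Fin n → ℂ) :
    HasSum (fun l => φ.diagCoef l * L.thetaTerm τ z l) (φ.toFun τ z) := by
  have hinj : Function.Injective
      (fun l : Fin n → ℤ => ((L.halfNorm l, fun i => (l i : ℚ)) : ℤ × (Fin n → ℚ))) := by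
    intro l l' h
    ext i
    have := congrFun (congrArg Prod.snd h) i
    exact Int.cast_injective (α := ℚ) this
  have h := (hinj.hasSum_iff ?_).2 (φ.expansion τ hτ z)
  · refine h.congr_fun fun l => ?_
    simp only [Function.comp, diagCoef]
    by_cases hl : 2 * (L.halfNorm l : ℚ) = L.bq (fun i => (l i : ℚ)) (fun i => (l i : ℚ))
    · rw [EvenLattice.thetaTerm, ← hl]
      simp
    · rw [hsupp _ _ (Or.inl hl)]
      simp
  · rintro ⟨m, l⟩ hml
    have : φ.coef m l = 0 := by
      apply hsupp
      by_contra! hc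
      obtain ⟨h1, h2⟩ := hc
      choose l' hl' using h2
      obtain rfl : l = fun i => (l' i : ℚ) := funext hl'
      refine hml ⟨l', ?_⟩
      simp [EvenLattice.halfNorm, ← h1]
    simp [this]

/-- The elliptic transformation law makes the coefficients along `2n = (l,l)` constant. -/
theorem diagCoef_const
    (hsupp : ∀ (m : ℤ) (l : Fin n → ℚ), (2 * (m : ℚ) ≠ L.bq l l ∨ ¬L.IsIntVec l) →
      φ.coef m l = 0) (x : Fin n → ℤ) : φ.diagCoef x = φ.coef 0 0 := by
  have hI : Complex.I ∈ UH := by simp [UH]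
  have key : ∀ l, φ.diagCoef (l - x) - φ.diagCoef l = 0 := by
    refine L.thetaTerm_unique Complex.I _ fun z => ?_
    have h1 := φ.hasSum_diag hsupp hI z
    have h2 := φ.hasSum_diag hsupp hI (fun i => z i + (x i : ℂ) * Complex.I)
    have he := φ.elliptic (fun i => (x i : ℚ)) 0 (fun i => ⟨x i, rfl⟩) (fun i => ⟨0, by simp⟩)
      Complex.I hI z
    have hc := L.bc_cast (fun i => (x i : ℚ)) (fun i => (x i : ℚ))
    simp only [Pi.zero_apply, Rat.cast_zero, add_zero, Rat.cast_intCast] at he hc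
    rw [he, ← hc] at h2
    have h3 := h2.mul_right (Complex.exp ((Real.pi : ℂ) * Complex.I *
      (L.bc (fun i => (x i : ℂ)) (fun i => (x i : ℂ)) * Complex.I
        + 2 * L.bc (fun i => (x i : ℂ)) z)))
    simp only [mul_assoc (φ.diagCoef _), L.thetaTerm_shift] at h3
    rw [mul_right_comm, ← Complex.exp_add, neg_mul, neg_add_cancel, Complex.exp_zero,
      one_mul] at h3
    have h4 := (Equiv.subRight x).hasSum_iff.2 h3
    simp only [Function.comp_def, Equiv.subRight_apply, sub_add_cancel] at h4
    have h5 := h4.sub h1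
    simp only [← sub_mul, sub_self] at h5
    exact h5
  have := sub_eq_zero.1 (key x)
  rw [sub_self] at this
  rw [← this]
  have hz : L.halfNorm 0 = 0 := by simp [EvenLattice.halfNorm, EvenLattice.bq, dotProduct]
  rw [diagCoef, hz]
  congr 1

/-- Only characters indexed by `L` occur, so `z ↦ φ(τ,z)` is periodic under `L^∨`. -/
theorem periodic_dual
    (hsupp : ∀ (m : ℤ) (l : Fin n → ℚ), (2 * (m : ℚ) ≠ L.bq l l ∨ ¬L.IsIntVec l) →
      φ.coef m l = 0) {τ : ℂ} (hτ : τ ∈ UH) (u : Fin n → ℂ)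
    (hu : ∀ l : Fin n → ℤ, ∃ m : ℤ, L.bc (fun i => (l i : ℂ)) u = m) (z : Fin n → ℂ) :
    φ.toFun τ (z + u) = φ.toFun τ z := by
  refine (φ.hasSum_diag hsupp hτ (z + u)).unique
    ((φ.hasSum_diag hsupp hτ z).congr_fun fun l => ?_)
  obtain ⟨m, hm⟩ := hu l
  rw [L.thetaTerm_mul τ (z + u), L.thetaTerm_mul τ z, L.bc_add_right, hm, mul_add,
    Complex.exp_add, mul_comm _ (m : ℂ), Complex.exp_int_mul_two_pi_mul_I, mul_one]

end WeakJacobiForm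

/-- a holomorphic Jacobi form of singular weight `rank(L)/2` and index `L`
supported on pairs `(n,l)` with `2n = (l,l)` and `l ∈ L`, with `f(0,0) ≠ 0`, is
`f(0,0)` times the theta series of `L`, and `L` is unimodular. -/
theorem singular_theta_unimodular {n₀ : ℕ} (L : EvenLattice n₀) (k : ℤ)
    (hk : 2 * k = (n₀ : ℤ)) (φ : WeakJacobiForm L k)
    (hhol : ∀ (m : ℤ) (l : Fin n₀ → ℚ), φ.coef m l ≠ 0 → 0 ≤ 2 * (m : ℚ) - L.bq l l)
    (hsupp : ∀ (m : ℤ) (l : Fin n₀ → ℚ), (2 * (m : ℚ) ≠ L.bq l l ∨ ¬L.IsIntVec l) →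
      φ.coef m l = 0)
    (h0 : φ.coef 0 0 ≠ 0) :
    (∀ τ ∈ UH, ∀ z : Fin n₀ → ℂ,
        φ.toFun τ z = φ.coef 0 0 *
          ∑' l : Fin n₀ → ℤ,
            Complex.exp (2 * (Real.pi : ℂ) * Complex.I *
              (((L.bq (fun i => (l i : ℚ)) (fun i => (l i : ℚ)) / 2 : ℚ) : ℂ) * τ +
                L.bc (fun i => (l i : ℂ)) z))) ∧
      L.Unimodular := by
  refine ⟨fun τ hτ z => ?_, fun y hy => ?_⟩
  · have h := φ.hasSum_diag hsupp hτ z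
    simp only [φ.diagCoef_const hsupp] at h
    rw [← h.tsum_eq, tsum_mul_left]
    rfl
  have hI : Complex.I ∈ UH := by simp [UH]
  -- `φ(i, ·)` is not identically zero, since its constant coefficient is not.
  obtain ⟨z, hz⟩ : ∃ z, φ.toFun Complex.I z ≠ 0 := by
    by_contra! hc
    have := L.thetaTerm_unique Complex.I φ.diagCoef
      (fun z => hc z ▸ φ.hasSum_diag hsupp hI z) 0
    rw [φ.diagCoef_const hsupp] at this
    exact h0 this
  set Y : Fin n₀ → ℂ := fun i => (y i : ℂ) with hY
  have hYdual : ∀ l : Fin n₀ → ℤ, ∃ m : ℤ, L.bc (fun i => (l i : ℂ)) Y = m := by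
    intro l
    obtain ⟨m, hm⟩ := hy (fun i => (l i : ℚ)) (fun i => ⟨l i, rfl⟩)
    refine ⟨m, ?_⟩
    have := L.bc_cast y (fun i => (l i : ℚ))
    rw [hm] at this
    simp only [Rat.cast_intCast] at this
    rw [L.bc_comm, this]
  -- The inversion `τ ↦ -1/τ` fixes `i` and multiplies `z` by `-i`.
  have hS : ∀ z : Fin n₀ → ℂ, φ.toFun Complex.I (fun i => z i / Complex.I) =
      Complex.I ^ k * Complex.exp ((Real.pi : ℂ) * L.bc z z) * φ.toFun Complex.I z := by
    intro z
    have := φ.modular 0 (-1) 1 0 (by norm_num) Complex.I hI z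
    have e : (-1 : ℂ) / Complex.I = Complex.I := by simp
    have e2 : (Real.pi : ℂ) * Complex.I * L.bc z z / Complex.I = Real.pi * L.bc z z := by
      field_simp
    simpa [e2] using this
  -- Conjugating the `L^∨`-periodicity by the inversion gives quasi-periodicity under `i L^∨`.
  have hq : ∀ z : Fin n₀ → ℂ, φ.toFun Complex.I z =
      Complex.exp ((Real.pi : ℂ) * (2 * Complex.I * L.bc Y z - L.bc Y Y)) *
        φ.toFun Complex.I (z + Complex.I • Y) := by
    intro z
    have h1 := hS (z + Complex.I • Y)
    have e : (fun i => (z + Complex.I • Y) i / Complex.I) = (fun i => z i / Complex.I) + Y := by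
      ext i
      simp only [Pi.add_apply, Pi.smul_apply, smul_eq_mul]
      field_simp
    rw [e, φ.periodic_dual hsupp hI Y hYdual, hS z] at h1
    have e3 : (Real.pi : ℂ) * L.bc (z + Complex.I • Y) (z + Complex.I • Y) =
        Real.pi * L.bc z z + Real.pi * (2 * Complex.I * L.bc Y z - L.bc Y Y) := by
      simp only [L.bc_add_left, L.bc_add_right, L.bc_smul_right, L.bc_smul_left]
      rw [L.bc_comm z Y]
      linear_combination (Real.pi : ℂ) * L.bc Y Y * Complex.I_mul_I
    rw [e3, Complex.exp_add] at h1
    have hne : Complex.I ^ k * Complex.exp ((Real.pi : ℂ) * L.bc z z) ≠ 0 :=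
      mul_ne_zero (zpow_ne_zero _ Complex.I_ne_zero) (Complex.exp_ne_zero _)
    apply mul_left_cancel₀ hne
    rw [h1]
    ring
  intro j
  -- `u` is the vector of `L^∨` dual to the `j`-th standard basis vector.
  obtain ⟨u, hu⟩ := L.exists_bc_eq (Pi.single j 1)
  have huj : ∀ x : Fin n₀ → ℂ, L.bc x u = x j := fun x => by simp [hu x, Pi.single_apply]
  have hper := φ.periodic_dual hsupp hI u (fun l => ⟨l j, huj _⟩)
  -- Comparing the quasi-periodicity at `z` and at `z + u` forces `exp (2πi (y,u)) = 1`.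
  have h1 := hq (z + u)
  have e4 : z + u + Complex.I • Y = (z + Complex.I • Y) + u := by abel
  rw [e4, hper, hper, L.bc_add_right, huj] at h1
  have e5 : (Real.pi : ℂ) * (2 * Complex.I * (L.bc Y z + Y j) - L.bc Y Y) =
      2 * Real.pi * Complex.I * Y j + Real.pi * (2 * Complex.I * L.bc Y z - L.bc Y Y) := by ring
  rw [e5, Complex.exp_add, mul_assoc, ← hq z] at h1
  have h2 : Complex.exp (2 * Real.pi * Complex.I * Y j) = 1 :=
    mul_right_cancel₀ hz (by rw [← h1, one_mul])
  obtain ⟨m, hm⟩ := Complex.exp_eq_one_iff.1 h2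
  refine ⟨m, ?_⟩
  have h3 : Y j = (m : ℂ) := by
    have hp : (2 * (Real.pi : ℂ) * Complex.I) ≠ 0 := Complex.two_pi_I_ne_zero
    apply mul_left_cancel₀ hp
    rw [hm]
    ring
  simp only [hY] at h3
  exact_mod_cast h3
end
end

section
/- Fix positive integers m and n, and let L = nA₁(m) be the lattice ℤⁿ equipped with the bilinear form (x,y) = 2m·Σ_{i=1}^{n} xᵢyᵢ, an even positive-definite lattice whose dual is L^∨ = (1/(2m))·ℤⁿ. Let c ∈ ℂ and let f be a weakly holomorphic Jacobi form of weight 0 and index L whose Fourier coefficients satisfy: f(n',l) = 0 for all n' < 0; f(0, eᵢ/(2m)) = f(0, −eᵢ/(2m)) = c for 1 ≤ i ≤ n, where e₁,…,e_n is the standard basis of ℤⁿ; and f(0,l) = 0 for every other nonzero l ∈ L^∨. Then m·(2nc + f(0,0)) = 12c. -/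
/-! The identity follows by restricting the Jacobi form to a line and looking at its Taylor expansion
in the elliptic variable.

On the line spanned by `e₁` one gets `ψ(τ, w) = φ(τ, w e₁) = ∑ f(N, l) e(N τ + r w)` with
`r = (l, e₁)`, satisfying `ψ(-1/τ, w/τ) = e(m w²/τ) ψ(τ, w)`. Since only `N ≥ 0` occurs, `ψ(τ, 0)` is
a modular form of weight `0` and level one, hence a constant `C`, the sum of the `q⁰` coefficients
(`eq_const_of_invariant`). The coefficient of `w²` is `(2πi)² g(τ) / 2` with
`g = ∑ f(N, l) r² e(N τ)`, and comparing second difference quotients in `w` on both sides of the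
transformation law gives `g(-1/τ) = τ² g(τ) + (m C / πi) τ`.

A quasimodular form of weight `2` like `g` has a determined constant term `D`. Let `G` be a primitive
of `g`, built termwise from the series (`exists_primitive`), so that `G(τ + 1) - G(τ) = D`. Then
`G(-1/τ) - G(τ) - (m C / πi) log τ` is constant on the upper half-plane, and equating its values at
`i` and at `e^{2πi/3}`, where `-1/τ = τ + 1`, yields `6 D = m C` (`period_of_primitive`,
`q0_identity_one_variable`). For the given `q⁰` term `C = f(0,0) + 2 n c`, while `D = 2 c` because
`r = ±1` for `l = ±e₁/(2m)` and `r = 0` for the other indices. -/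

noncomputable section

open Matrix Complex

/-! ### Series on the upper half-plane and modular forms of weight zero -/

/-- A series `∑ bₚ e(Nₚ τ)` with `Nₚ ≥ 0`, absolutely convergent on the upper half-plane, has a
primitive `G` there, and `G (τ + 1) - G τ` is the constant term of the series: the primitive is
`∑ bₚ hₚ`, with `hₚ = τ` if `Nₚ = 0` and `hₚ = e(Nₚ τ) / (2πi Nₚ)` otherwise. -/
lemma exists_primitive {ι : Type*} (N : ι → ℤ) (b : ι → ℂ) (hN : ∀ p, b p ≠ 0 → 0 ≤ N p)
    (hs : ∀ y : ℝ, 0 < y → Summable fun p => ‖b p‖ * Real.exp (-(2 * Real.pi * N p * y))) :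
    ∃ G : ℂ → ℂ,
      (∀ τ ∈ UH, HasDerivAt G (∑' p, b p * cexp (2 * Real.pi * I * (N p * τ))) τ) ∧
      ∀ τ ∈ UH, HasSum (fun p => if N p = 0 then b p else 0) (G (τ + 1) - G τ) := by
  have hnorm : ∀ p (τ : ℂ), ‖cexp (2 * Real.pi * I * (N p * τ))‖
      = Real.exp (-(2 * Real.pi * N p * τ.im)) := by
    intro p τ
    rw [Complex.norm_exp]
    congr 1
    simp
    ring
  let h : ι → ℂ → ℂ := fun p τ => b p * (if N p = 0 then τ else
    cexp (2 * Real.pi * I * (N p * τ)) / (2 * Real.pi * I * N p))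
  have hpi : (2 * Real.pi * I : ℂ) ≠ 0 := Complex.two_pi_I_ne_zero
  have hderiv : ∀ p (τ : ℂ), HasDerivAt (h p) (b p * cexp (2 * Real.pi * I * (N p * τ))) τ := by
    intro p τ
    by_cases h0 : N p = 0
    · simp only [h, h0, if_true]
      simpa using (hasDerivAt_id τ).const_mul (b p)
    · simp only [h, h0, if_false]
      have hNp : (N p : ℂ) ≠ 0 := by exact_mod_cast h0
      have h1 : HasDerivAt (fun τ : ℂ => 2 * Real.pi * I * (N p * τ)) (2 * Real.pi * I * (N p)) τ := by
        simpa using ((hasDerivAt_id τ).const_mul (N p : ℂ)).const_mul (2 * Real.pi * I : ℂ)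
      have h2 := ((h1.cexp).div_const (2 * Real.pi * I * N p)).const_mul (b p)
      refine h2.congr_deriv ?_
      field_simp
  have hsum : ∀ τ ∈ UH, Summable fun p => h p τ := by
    intro τ hτ
    refine Summable.of_norm_bounded (((hs τ.im hτ)).mul_right (1 + ‖τ‖)) fun p => ?_
    rw [norm_mul, mul_assoc ‖b p‖]
    refine mul_le_mul_of_nonneg_left ?_ (norm_nonneg _)
    split_ifs with h0
    · simp [h0]
    · rw [norm_div, hnorm]
      have h1 : 1 ≤ ‖(2 * Real.pi * I * N p : ℂ)‖ := by
        have : (1 : ℝ) ≤ |(N p : ℝ)| := by exact_mod_cast Int.one_le_abs h0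
        simp [abs_of_pos Real.pi_pos]
        nlinarith [Real.pi_gt_three]
      calc _ ≤ Real.exp (-(2 * Real.pi * N p * τ.im)) := div_le_self (Real.exp_pos _).le h1
        _ ≤ _ :=
          le_mul_of_one_le_right (Real.exp_pos _).le (by linarith [norm_nonneg τ])
  refine ⟨fun τ => ∑' p, h p τ, fun τ hτ => ?_, fun τ hτ => ?_⟩
  · have hτ' : 0 < τ.im := hτ
    -- the derivatives are dominated on the half-plane `Im > Im τ / 2`
    have hmem : τ ∈ {z : ℂ | τ.im / 2 < z.im} := by
      change τ.im / 2 < τ.im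
      linarith
    refine hasDerivAt_tsum_of_isPreconnected (hs (τ.im / 2) (by linarith))
      (isOpen_lt continuous_const Complex.continuous_im)
      (convex_halfSpace_im_gt _).isPreconnected (fun p y _ => hderiv p y) ?_ hmem (hsum τ hτ) hmem
    intro p y hy
    have hy' : τ.im / 2 < y.im := hy
    rw [norm_mul, hnorm]
    by_cases hb : b p = 0
    · simp [hb]
    have : (0 : ℝ) ≤ N p := by exact_mod_cast hN p hb
    gcongr
  · have hτ1 : τ + 1 ∈ UH := by simpa [UH] using hτ
    convert! (hsum _ hτ1).hasSum.sub (hsum τ hτ).hasSum using 1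
    funext p
    simp only [h]
    split_ifs with h0
    · ring
    · rw [show (2 * Real.pi * I * (N p * (τ + 1)) : ℂ)
        = 2 * Real.pi * I * (N p * τ) + N p * (2 * Real.pi * I) by ring, Complex.exp_add,
        Complex.exp_int_mul_two_pi_mul_I]
      ring

open UpperHalfPlane ModularGroup ModularForm in
/-- A holomorphic function on the upper half-plane, invariant under `τ ↦ τ + 1` and `τ ↦ -1 / τ`
and bounded for `Im τ ≥ 1`, is a modular form of weight `0` and level one, hence constant. -/
lemma eq_const_of_invariant (f : ℂ → ℂ) (hd : DifferentiableOn ℂ f UH)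
    (hT : ∀ τ ∈ UH, f (τ + 1) = f τ) (hS : ∀ τ ∈ UH, f (-1 / τ) = f τ)
    (B : ℝ) (hB : ∀ τ : ℂ, 1 ≤ τ.im → ‖f τ‖ ≤ B) : ∃ C, ∀ τ ∈ UH, f τ = C := by
  let F : ℍ → ℂ := fun τ => f τ
  have hFT : F ∣[(0 : ℤ)] T = F := by
    ext z
    rw [ModularForm.SL_slash_apply, modular_T_smul]
    have := hT z z.im_pos
    simpa [F, add_comm] using this
  have hFS : F ∣[(0 : ℤ)] S = F := by
    ext z
    rw [ModularForm.SL_slash_apply, modular_S_smul]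
    have := hS z z.im_pos
    simpa [F, neg_div] using this
  have hF := SlashInvariantForm.slash_action_generators_SL2Z hFS hFT
  let Φ : ModularForm (MonoidHom.range (Matrix.SpecialLinearGroup.mapGL (n := Fin 2) (R := ℤ) ℝ)) 0 :=
    { toFun := F
      slash_action_eq' := by
        rintro A ⟨A, rfl⟩
        exact hF A
      holo' := by
        rw [UpperHalfPlane.mdifferentiable_iff]
        refine hd.congr fun z hz => ?_
        simp [F, ofComplex_apply_of_im_pos hz]
      bdd_at_cusps' := by
        intro c hc
        rw [Subgroup.IsArithmetic.isCusp_iff_isCusp_SL2Z] at hc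
        rw [OnePoint.isBoundedAt_iff_forall_SL2Z hc]
        intro γ _
        rw [hF γ, UpperHalfPlane.isBoundedAtImInfty_iff]
        exact ⟨B, 1, fun z hz => hB z hz⟩ }
  obtain ⟨C, hC⟩ := ModularFormClass.levelOne_weight_zero_const Φ
  exact ⟨C, fun τ hτ => congrFun hC (⟨τ, hτ⟩ : ℍ)⟩

/-! ### Difference quotients of the exponential -/

open Filter Topology in
/-- A second symmetric difference quotient of `exp`. -/
lemma tendsto_exp_quotient (a : ℂ) :
    Tendsto (fun w : ℂ => (cexp (a * w) + cexp (-(a * w)) - 2) / w ^ 2) (𝓝[≠] 0) (𝓝 (a ^ 2)) := by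
  rw [tendsto_iff_norm_sub_tendsto_zero]
  have hlim : Tendsto (fun w : ℂ => 2 * (‖a‖ ^ 3 * ‖w‖ * Real.exp (‖a‖ * ‖w‖))) (𝓝[≠] 0) (𝓝 0) := by
    have : Continuous fun w : ℂ => 2 * (‖a‖ ^ 3 * ‖w‖ * Real.exp (‖a‖ * ‖w‖)) := by fun_prop
    have := this.tendsto 0
    simp only [norm_zero, mul_zero, zero_mul] at this
    exact this.mono_left nhdsWithin_le_nhds
  refine squeeze_zero' (Eventually.of_forall fun _ => norm_nonneg _) ?_ hlim
  filter_upwards [self_mem_nhdsWithin] with w hw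
  have hw : w ≠ 0 := hw
  have h1 := Complex.norm_exp_sub_sum_le_norm_mul_exp (a * w) 3
  have h2 := Complex.norm_exp_sub_sum_le_norm_mul_exp (-(a * w)) 3
  simp only [Finset.sum_range_succ, Finset.sum_range_zero] at h1 h2
  rw [norm_neg] at h2
  have h3 := (norm_add_le _ _).trans (add_le_add h1 h2)
  have e : (cexp (a * w) + cexp (-(a * w)) - 2) / w ^ 2 - a ^ 2
      = (cexp (a * w) - (0 + (a * w) ^ 0 / (Nat.factorial 0 : ℂ) + (a * w) ^ 1 / (Nat.factorial 1 : ℂ)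
          + (a * w) ^ 2 / (Nat.factorial 2 : ℂ)) +
        (cexp (-(a * w)) - (0 + (-(a * w)) ^ 0 / (Nat.factorial 0 : ℂ)
          + (-(a * w)) ^ 1 / (Nat.factorial 1 : ℂ)
          + (-(a * w)) ^ 2 / (Nat.factorial 2 : ℂ)))) / w ^ 2 := by
    simp [Nat.factorial]
    field_simp
    ring
  rw [e, norm_div, norm_pow, div_le_iff₀ (by positivity)]
  refine h3.trans (le_of_eq ?_)
  rw [norm_mul]
  ring

/-- A bound for the second symmetric difference quotient, uniform in `‖w‖ ≤ 1`. -/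
lemma norm_exp_quotient_le (a w : ℂ) (hw : ‖w‖ ≤ 1) :
    ‖(cexp (a * w) + cexp (-(a * w)) - 2) / w ^ 2‖ ≤ 4 * Real.exp (2 * ‖a‖) := by
  rcases eq_or_ne w 0 with rfl | h0
  · simp; positivity
  have h1 := Complex.norm_exp_sub_sum_le_norm_mul_exp (a * w) 2
  have h2 := Complex.norm_exp_sub_sum_le_norm_mul_exp (-(a * w)) 2
  simp only [Finset.sum_range_succ, Finset.sum_range_zero] at h1 h2
  rw [norm_neg] at h2
  have h3 := (norm_add_le _ _).trans (add_le_add h1 h2)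
  have e : cexp (a * w) + cexp (-(a * w)) - 2
      = (cexp (a * w) - (0 + (a * w) ^ 0 / (Nat.factorial 0 : ℂ) + (a * w) ^ 1 / (Nat.factorial 1 : ℂ)) +
        (cexp (-(a * w)) - (0 + (-(a * w)) ^ 0 / (Nat.factorial 0 : ℂ)
          + (-(a * w)) ^ 1 / (Nat.factorial 1 : ℂ)))) := by
    simp [Nat.factorial]
    ring
  rw [e, norm_div, norm_pow, div_le_iff₀ (by positivity)]
  refine h3.trans ?_
  rw [norm_mul]
  have h4 : Real.exp (‖a‖ * ‖w‖) ≤ Real.exp ‖a‖ :=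
    Real.exp_le_exp.mpr (mul_le_of_le_one_right (norm_nonneg _) hw)
  have h5 : ‖a‖ ^ 2 ≤ 2 * Real.exp ‖a‖ := by
    have := Real.quadratic_le_exp_of_nonneg (norm_nonneg a)
    nlinarith [norm_nonneg a]
  have h6 : Real.exp (2 * ‖a‖) = Real.exp ‖a‖ * Real.exp ‖a‖ := by
    rw [← Real.exp_add]; ring_nf
  calc _ = 2 * (‖a‖ ^ 2 * Real.exp (‖a‖ * ‖w‖)) * ‖w‖ ^ 2 := by ring
    _ ≤ 2 * (2 * Real.exp ‖a‖ * Real.exp ‖a‖) * ‖w‖ ^ 2 := by gcongr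
    _ = _ := by rw [h6]; ring

/-! ### The constant term in weight two -/

/-- The contour argument proving that level one quasimodular forms of weight `2` have a determined
constant term, phrased through a primitive `G` of `g`. If `g (-1/τ) = τ² g τ + κ τ`, then
`G (-1/τ) - G τ - κ log τ` is constant, and the values at `τ = i` and at the primitive cube root of
unity in the upper half-plane, where `-1/τ = τ + 1`, determine the period of `G`. -/
lemma period_of_primitive (G g : ℂ → ℂ) (κ a : ℂ) (hG : ∀ τ ∈ UH, HasDerivAt G (g τ) τ)
    (hg : ∀ τ ∈ UH, g (-1 / τ) = τ ^ 2 * g τ + κ * τ)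
    (ha : ∀ τ ∈ UH, G (τ + 1) - G τ = a) : a = κ * (Real.pi * I / 6) := by
  have hUH : IsOpen UH := isOpen_lt continuous_const Complex.continuous_im
  have hpre : IsPreconnected UH := (convex_halfSpace_im_gt 0).isPreconnected
  have hinv : ∀ τ ∈ UH, -1 / τ ∈ UH := by
    intro τ hτ
    have h0 : 0 < τ.im := hτ
    have hτ0 : τ ≠ 0 := by rintro rfl; simp at h0
    have : 0 < Complex.normSq τ := Complex.normSq_pos.mpr hτ0
    change 0 < (-1 / τ).im
    rw [Complex.div_im]
    simp only [Complex.neg_im, Complex.one_im, Complex.neg_re, Complex.one_re]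
    rw [neg_zero, zero_mul, zero_div, zero_sub, neg_one_mul, neg_div, neg_neg]
    positivity
  let H : ℂ → ℂ := fun τ => G (-1 / τ) - G τ - κ * Complex.log τ
  have hH : ∀ τ ∈ UH, HasDerivAt H 0 τ := by
    intro τ hτ
    have h0 : 0 < τ.im := hτ
    have hτ0 : τ ≠ 0 := by rintro rfl; simp at h0
    have h1 : HasDerivAt (fun τ : ℂ => -1 / τ) (1 / τ ^ 2) τ := by
      have := ((hasDerivAt_inv hτ0).fun_neg).congr_deriv (g' := 1 / τ ^ 2) (by simp)
      simpa only [neg_div, one_div] using this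
    have h2 := (hG _ (hinv τ hτ)).comp τ h1
    have h3 := (Complex.hasDerivAt_log (z := τ) (Or.inr h0.ne')).const_mul κ
    have h4 := (h2.sub (hG τ hτ)).sub h3
    refine h4.congr_deriv ?_
    rw [hg τ hτ]
    field_simp
    ring
  have hI : I ∈ UH := by simp [UH]
  let ρ : ℂ := cexp ((2 * Real.pi / 3 : ℝ) * I)
  have hρ' : ρ = -1 / 2 + (Real.sqrt 3 / 2 : ℝ) * I := by
    simp only [ρ]
    rw [Complex.exp_mul_I, ← Complex.ofReal_cos, ← Complex.ofReal_sin,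
      show 2 * Real.pi / 3 = Real.pi - Real.pi / 3 by ring, Real.cos_pi_sub, Real.sin_pi_sub,
      Real.cos_pi_div_three, Real.sin_pi_div_three]
    push_cast
    ring
  have hρ : ρ ∈ UH := by simp [hρ', UH]
  have hρ0 : ρ ≠ 0 := Complex.exp_ne_zero _
  have hlog : Complex.log ρ = (2 * Real.pi / 3 : ℝ) * I := by
    apply Complex.log_exp <;> simp <;> nlinarith [Real.pi_pos]
  have hρS : -1 / ρ = ρ + 1 := by
    rw [div_eq_iff hρ0, hρ']
    have h3 : ((Real.sqrt 3 : ℝ) : ℂ) ^ 2 = 3 := by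
      rw [← Complex.ofReal_pow, Real.sq_sqrt (by norm_num)]; norm_num
    push_cast
    linear_combination (-1 / 4 : ℂ) * ((Real.sqrt 3 : ℝ) : ℂ) ^ 2 * Complex.I_sq + (1 / 4) * h3
  have hIS : -1 / I = I := by
    rw [div_eq_iff Complex.I_ne_zero, Complex.I_mul_I]
  have key : H ρ = H I :=
    hUH.is_const_of_deriv_eq_zero hpre
      (fun τ hτ => (hH τ hτ).differentiableAt.differentiableWithinAt)
      (fun τ hτ => (hH τ hτ).deriv) hρ hI
  simp only [H, hρS, hIS, hlog, Complex.log_I, ha ρ hρ] at key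
  push_cast at key
  linear_combination key

/-! ### The identity on a line, and for the lattice `nA₁(m)` -/

open Filter Topology in
/-- The one-variable identity. Let `ψ(τ, w) = ∑ bₚ e(Nₚ τ + rₚ w)` with `Nₚ ≥ 0` transform under
`τ ↦ -1/τ` as a Jacobi form of weight `0` and index `m`. If `C` and `D` are the sums of `bₚ` and of
`bₚ rₚ²` over the indices with `Nₚ = 0`, then `6 D = m C`. -/
lemma q0_identity_one_variable {ι : Type*} (N : ι → ℤ) (r : ι → ℝ) (b : ι → ℂ) (m : ℂ)
    (ψ : ℂ → ℂ → ℂ) (hN : ∀ p, b p ≠ 0 → 0 ≤ N p)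
    (hψ : ∀ τ ∈ UH, ∀ w, HasSum (fun p => b p * cexp (2 * Real.pi * I * (N p * τ + r p * w))) (ψ τ w))
    (hS : ∀ τ ∈ UH, ∀ w, ψ (-1 / τ) (w / τ) = cexp (2 * Real.pi * I * m * w ^ 2 / τ) * ψ τ w)
    (C D : ℂ) (hC : HasSum (fun p => if N p = 0 then b p else 0) C)
    (hD : HasSum (fun p => if N p = 0 then b p * (r p : ℂ) ^ 2 else 0) D) :
    6 * D = m * C := by
  have hpi : (2 * Real.pi * I : ℂ) ≠ 0 := Complex.two_pi_I_ne_zero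
  have hnorm : ∀ p (τ w : ℂ), ‖cexp (2 * Real.pi * I * (N p * τ + r p * w))‖
      = Real.exp (-(2 * Real.pi * N p * τ.im)) * Real.exp (-(2 * Real.pi * r p * w.im)) := by
    intro p τ w
    rw [Complex.norm_exp, ← Real.exp_add]
    congr 1
    simp
    ring
  -- absolute convergence at `w = ± i t` bounds the series with `e(r w)` replaced by `exp(2π|r|t)`
  have hexp : ∀ y : ℝ, 0 < y → ∀ t : ℝ, 0 ≤ t → Summable fun p =>
      ‖b p‖ * Real.exp (-(2 * Real.pi * N p * y)) * Real.exp (2 * Real.pi * |r p| * t) := by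
    intro y hy t ht
    have hyU : (y : ℂ) * I ∈ UH := by simpa [UH] using hy
    have h1 := (hψ _ hyU (t * I)).summable.norm
    have h2 := (hψ _ hyU (-(t * I))).summable.norm
    refine Summable.of_nonneg_of_le (fun p => by positivity) (fun p => ?_) (h1.add h2)
    rw [norm_mul, norm_mul, hnorm, hnorm]
    simp only [Complex.mul_im, Complex.ofReal_re, Complex.I_im, mul_one, Complex.ofReal_im,
      Complex.I_re, mul_zero, add_zero, Complex.neg_im, mul_assoc, ← mul_add]
    gcongr
    rcases abs_cases (r p) with ⟨h, _⟩ | ⟨h, _⟩ <;> rw [h]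
    · refine le_trans (le_of_eq ?_) (le_add_of_nonneg_left (Real.exp_pos _).le)
      congr 1; ring
    · refine le_trans (le_of_eq ?_) (le_add_of_nonneg_right (Real.exp_pos _).le)
      congr 1; ring
  have hs0 : ∀ y : ℝ, 0 < y → Summable fun p => ‖b p‖ * Real.exp (-(2 * Real.pi * N p * y)) := by
    intro y hy
    simpa using hexp y hy 0 le_rfl
  have hs2 : ∀ y : ℝ, 0 < y →
      Summable fun p => ‖b p * (r p : ℂ) ^ 2‖ * Real.exp (-(2 * Real.pi * N p * y)) := by
    intro y hy
    refine Summable.of_nonneg_of_le (fun p => by positivity) (fun p => ?_) (hexp y hy 1 zero_le_one)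
    have h1 : |r p| ^ 2 ≤ Real.exp (2 * Real.pi * |r p| * 1) := by
      have h3 : |r p| ≤ 2 * Real.pi * |r p| * 1 := by nlinarith [Real.pi_gt_three, abs_nonneg (r p)]
      have := Real.quadratic_le_exp_of_nonneg ((abs_nonneg (r p)).trans h3)
      nlinarith [Real.pi_gt_three, abs_nonneg (r p), sq_nonneg (r p),
        mul_nonneg (abs_nonneg (r p)) (abs_nonneg (r p)),
        mul_self_le_mul_self (abs_nonneg (r p)) h3,
        mul_self_le_mul_self (a := 2 * |r p|) (b := 2 * Real.pi * |r p| * 1) (by positivity)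
          (by nlinarith [Real.pi_gt_three, abs_nonneg (r p)])]
    rw [norm_mul, norm_pow, Complex.norm_real, Real.norm_eq_abs]
    calc _ = ‖b p‖ * Real.exp (-(2 * Real.pi * N p * y)) * |r p| ^ 2 := by ring
      _ ≤ _ := by gcongr
  have hψ0 : ∀ τ ∈ UH, HasSum (fun p => b p * cexp (2 * Real.pi * I * (N p * τ))) (ψ τ 0) := by
    intro τ hτ
    simpa using hψ τ hτ 0
  -- `ψ(τ, 0)` is constant, with value `C`
  obtain ⟨P, hP, hP1⟩ := exists_primitive N b hN hs0
  have hP' : ∀ τ ∈ UH, HasDerivAt P (ψ τ 0) τ := fun τ hτ => (hψ0 τ hτ).tsum_eq ▸ hP τ hτ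
  have hUH : IsOpen UH := isOpen_lt continuous_const Complex.continuous_im
  have hconst : ∃ C₀, ∀ τ ∈ UH, ψ τ 0 = C₀ := by
    refine eq_const_of_invariant (fun τ => ψ τ 0) ?_ ?_ ?_
      (∑' p, ‖b p‖ * Real.exp (-(2 * Real.pi * N p * (1 : ℝ)))) ?_
    · have h1 : DifferentiableOn ℂ P UH :=
        fun τ hτ => (hP' τ hτ).differentiableAt.differentiableWithinAt
      exact (h1.deriv hUH).congr fun τ hτ => (hP' τ hτ).deriv.symm
    · intro τ hτ
      have hτ1 : τ + 1 ∈ UH := by simpa [UH] using hτ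
      refine (hψ0 _ hτ1).unique ?_
      convert hψ0 τ hτ using 3 with p
      rw [show (2 * Real.pi * I * (N p * (τ + 1)) : ℂ)
        = 2 * Real.pi * I * (N p * τ) + N p * (2 * Real.pi * I) by ring, Complex.exp_add,
        Complex.exp_int_mul_two_pi_mul_I, mul_one]
    · intro τ hτ
      simpa using hS τ hτ 0
    · intro τ hτ
      have hτU : τ ∈ UH := lt_of_lt_of_le one_pos hτ
      rw [← (hψ0 τ hτU).tsum_eq]
      refine tsum_of_norm_bounded (hs0 1 one_pos).hasSum fun p => ?_
      by_cases hb : b p = 0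
      · simp [hb]
      have h0 : (0 : ℝ) ≤ N p := by exact_mod_cast hN p hb
      have := hnorm p τ 0
      simp only [mul_zero, add_zero, Complex.zero_im, neg_zero, Real.exp_zero, mul_one] at this
      rw [norm_mul, this]
      gcongr
  obtain ⟨C₀, hC0⟩ := hconst
  have hper : ∀ τ ∈ UH, P (τ + 1) - P τ = C := fun τ hτ => (hP1 τ hτ).unique hC
  have hCC : C₀ = C := by
    -- `P - C₀ τ` has vanishing derivative
    have hI : I ∈ UH := by simp [UH]
    have hI1 : I + 1 ∈ UH := by simp [UH]
    have hd : ∀ τ ∈ UH, HasDerivAt (fun τ => P τ - C₀ * τ) 0 τ := by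
      intro τ hτ
      have := (hP' τ hτ).sub ((hasDerivAt_id τ).const_mul C₀)
      rw [hC0 τ hτ] at this
      simpa using! this
    have := hUH.is_const_of_deriv_eq_zero (convex_halfSpace_im_gt 0).isPreconnected
      (fun τ hτ => (hd τ hτ).differentiableAt.differentiableWithinAt)
      (fun τ hτ => (hd τ hτ).deriv) hI1 hI
    have h2 := hper I hI
    linear_combination h2 - this
  subst hCC
  -- the second Taylor coefficient in `w`, up to the factor `(2πi)²`
  let g : ℂ → ℂ := fun τ => ∑' p, b p * (r p : ℂ) ^ 2 * cexp (2 * Real.pi * I * (N p * τ))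
  have hlim : ∀ τ ∈ UH, Tendsto (fun w => (ψ τ w + ψ τ (-w) - 2 * ψ τ 0) / w ^ 2) (𝓝[≠] 0)
      (𝓝 ((2 * Real.pi * I) ^ 2 * g τ)) := by
    intro τ hτ
    have hτ' : 0 < τ.im := hτ
    have e1 : ∀ w, (ψ τ w + ψ τ (-w) - 2 * ψ τ 0) / w ^ 2 = ∑' p,
        b p * cexp (2 * Real.pi * I * (N p * τ)) *
          ((cexp (2 * Real.pi * I * r p * w) + cexp (-(2 * Real.pi * I * r p * w)) - 2) / w ^ 2) := by
      intro w
      refine (HasSum.tsum_eq ?_).symm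
      convert! (((hψ τ hτ w).add (hψ τ hτ (-w))).sub ((hψ0 τ hτ).mul_left 2)).div_const (w ^ 2)
        using 1
      funext p
      rw [show (2 * Real.pi * I * (N p * τ + r p * w) : ℂ)
        = 2 * Real.pi * I * (N p * τ) + 2 * Real.pi * I * r p * w by ring,
        show (2 * Real.pi * I * (N p * τ + r p * -w) : ℂ)
        = 2 * Real.pi * I * (N p * τ) + -(2 * Real.pi * I * r p * w) by ring,
        Complex.exp_add, Complex.exp_add]
      ring
    have e2 : (2 * Real.pi * I) ^ 2 * g τ = ∑' p, b p * cexp (2 * Real.pi * I * (N p * τ)) *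
        (2 * Real.pi * I * r p) ^ 2 := by
      simp only [g]
      rw [← tsum_mul_left]
      exact tsum_congr fun p => by ring
    rw [e2]
    simp only [e1]
    refine tendsto_tsum_of_dominated_convergence
      (bound := fun p => ‖b p‖ * Real.exp (-(2 * Real.pi * N p * τ.im)) *
        Real.exp (2 * Real.pi * |r p| * 2) * 4)
      ((hexp τ.im hτ' 2 zero_le_two).mul_right 4)
      (fun p => (tendsto_exp_quotient _).const_mul _) ?_
    have hball : ∀ᶠ w : ℂ in 𝓝[≠] 0, ‖w‖ ≤ 1 := by
      refine nhdsWithin_le_nhds ?_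
      filter_upwards [Metric.closedBall_mem_nhds (0 : ℂ) one_pos] with w hw
      simpa using hw
    filter_upwards [hball] with w hw p
    have h1 := norm_exp_quotient_le (2 * Real.pi * I * r p) w hw
    have h2 : ‖(2 * Real.pi * I * r p : ℂ)‖ = 2 * Real.pi * |r p| := by
      simp [abs_of_pos Real.pi_pos]
    have h3 := hnorm p τ 0
    simp only [mul_zero, add_zero, Complex.zero_im, neg_zero, Real.exp_zero, mul_one] at h3
    rw [h2] at h1
    rw [norm_mul, norm_mul, h3, mul_assoc (‖b p‖ * _)]
    refine mul_le_mul_of_nonneg_left (h1.trans (le_of_eq ?_)) (by positivity)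
    rw [mul_comm]
    congr 2
    ring
  have hg : ∀ τ ∈ UH, g (-1 / τ) = τ ^ 2 * g τ + (m * C₀ / (Real.pi * I)) * τ := by
    intro τ hτ
    have h0 : 0 < τ.im := hτ
    have hτ0 : τ ≠ 0 := by rintro rfl; simp at h0
    have hinv : -1 / τ ∈ UH := by
      have : 0 < Complex.normSq τ := Complex.normSq_pos.mpr hτ0
      change 0 < (-1 / τ).im
      rw [Complex.div_im]
      simp only [Complex.neg_im, Complex.one_im, Complex.neg_re, Complex.one_re]
      rw [neg_zero, zero_mul, zero_div, zero_sub, neg_one_mul, neg_div, neg_neg]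
      positivity
    have hscale : Tendsto (fun w : ℂ => w / τ) (𝓝[≠] 0) (𝓝[≠] 0) := by
      refine tendsto_nhdsWithin_iff.mpr ⟨?_, ?_⟩
      · have : Continuous fun w : ℂ => w / τ := by fun_prop
        have := this.tendsto 0
        rw [zero_div] at this
        exact this.mono_left nhdsWithin_le_nhds
      · filter_upwards [self_mem_nhdsWithin] with w hw
        exact div_ne_zero hw hτ0
    have hA := (hlim _ hinv).comp hscale
    -- the exponential factor of the transformation law and its second Taylor coefficient
    let E : ℂ → ℂ := fun w => cexp (2 * Real.pi * I * m / τ * w ^ 2)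
    have hE1 : Tendsto E (𝓝[≠] 0) (𝓝 1) := by
      have : Continuous E := by fun_prop
      have := this.tendsto 0
      simp only [E] at this
      simp only [ne_eq, OfNat.ofNat_ne_zero, not_false_eq_true, zero_pow, mul_zero,
        Complex.exp_zero] at this
      exact this.mono_left nhdsWithin_le_nhds
    have hE2 : Tendsto (fun w => (E w - 1) / w ^ 2) (𝓝[≠] 0) (𝓝 (2 * Real.pi * I * m / τ)) := by
      have hd : HasDerivAt (fun u : ℂ => cexp (2 * Real.pi * I * m / τ * u))
          (2 * Real.pi * I * m / τ) 0 := by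
        have := ((hasDerivAt_id (0 : ℂ)).const_mul (2 * Real.pi * I * m / τ)).cexp
        simpa using this
      have hsq : Tendsto (fun w : ℂ => w ^ 2) (𝓝[≠] 0) (𝓝[≠] 0) := by
        refine tendsto_nhdsWithin_iff.mpr ⟨?_, ?_⟩
        · have := (continuous_pow (M := ℂ) 2).tendsto 0
          rw [zero_pow two_ne_zero] at this
          exact this.mono_left nhdsWithin_le_nhds
        · filter_upwards [self_mem_nhdsWithin] with w hw
          exact pow_ne_zero 2 hw
      refine ((hasDerivAt_iff_tendsto_slope.mp hd).comp hsq).congr fun w => ?_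
      simp [slope_def_field, E]
    have hB := ((hE1.mul (hlim τ hτ)).add (hE2.const_mul (2 * C₀))).const_mul (τ ^ 2)
    have heq := tendsto_nhds_unique (hA.congr fun w => ?_) hB
    · have h4 : (2 * Real.pi * I) ^ 2 * g (-1 / τ) = (2 * Real.pi * I) ^ 2 *
          (τ ^ 2 * g τ + (m * C₀ / (Real.pi * I)) * τ) := by
        rw [heq]
        have hpi' : (Real.pi : ℂ) ≠ 0 := by exact_mod_cast Real.pi_ne_zero
        have hI0 := Complex.I_ne_zero
        field_simp
      exact mul_left_cancel₀ (pow_ne_zero 2 hpi) h4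
    · have h5 := hS τ hτ w
      have h6 := hS τ hτ (-w)
      simp only [Function.comp]
      rw [hC0 _ hinv, hC0 _ hτ, ← neg_div, h5, h6]
      simp only [E]
      rw [show 2 * Real.pi * I * m * w ^ 2 / τ = 2 * Real.pi * I * m / τ * w ^ 2 by ring,
        show 2 * Real.pi * I * m * (-w) ^ 2 / τ = 2 * Real.pi * I * m / τ * w ^ 2 by ring]
      rcases eq_or_ne w 0 with rfl | hw
      · simp
      field_simp
      ring
  obtain ⟨G, hG, hG1⟩ := exists_primitive N (fun p => b p * (r p : ℂ) ^ 2)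
    (fun p hp => hN p (left_ne_zero_of_mul hp)) hs2
  have hfin := period_of_primitive G g _ D hG hg fun τ hτ => (hG1 τ hτ).unique hD
  have hpi' : (Real.pi : ℂ) ≠ 0 := by exact_mod_cast Real.pi_ne_zero
  have hI0 := Complex.I_ne_zero
  rw [hfin]
  field_simp

/-- the `q⁰`-identity for the weight `0` Jacobi form attached to a dd-modular
form on `2U ⊕ nA₁(−m)`: if `L = nA₁(m)` is `ℤⁿ` with the bilinear form
`(x,y) = 2m·Σ xᵢyᵢ` (i.e. Gram matrix `2m·Id`), and `f` is a weakly holomorphic Jacobi form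
of weight `0` and index `L` with `f(n',l) = 0` for `n' < 0`,
`f(0, ±eᵢ/(2m)) = c` and `f(0,l) = 0` for every other nonzero `l`, then
`m·(2nc + f(0,0)) = 12c`. -/
theorem dd_q0_identity (m n : ℕ) (hm : 0 < m) (hn : 0 < n) (L : EvenLattice n)
    (hG : L.G = Matrix.diagonal fun _ : Fin n => 2 * (m : ℤ)) (c : ℂ)
    (φ : WeakJacobiForm L 0)
    (hneg : ∀ m' : ℤ, m' < 0 → ∀ l : Fin n → ℚ, φ.coef m' l = 0)
    (hbasis : ∀ i : Fin n,
      φ.coef 0 (fun j => if j = i then (1 : ℚ) / (2 * m) else 0) = c ∧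
      φ.coef 0 (fun j => if j = i then -(1 : ℚ) / (2 * m) else 0) = c)
    (hother : ∀ l : Fin n → ℚ, l ≠ 0 →
      (∀ i : Fin n, l ≠ (fun j => if j = i then (1 : ℚ) / (2 * m) else 0) ∧
        l ≠ (fun j => if j = i then -(1 : ℚ) / (2 * m) else 0)) →
      φ.coef 0 l = 0) :
    (m : ℂ) * (2 * (n : ℂ) * c + φ.coef 0 0) = 12 * c := by
  have hm0 : (m : ℚ) ≠ 0 := by exact_mod_cast hm.ne'
  have hmC : (m : ℂ) ≠ 0 := by exact_mod_cast hm.ne'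
  have hbc : ∀ x y : Fin n → ℂ, L.bc x y = 2 * m * ∑ i, x i * y i := by
    intro x y
    simp only [EvenLattice.bc, hG, dotProduct, Finset.mul_sum]
    refine Finset.sum_congr rfl fun i _ => ?_
    rw [Matrix.diagonal_map (by simp), Matrix.mulVec_diagonal]
    push_cast
    ring
  -- restriction to the line spanned by the basis vector `e i₀`
  let i₀ : Fin n := ⟨0, hn⟩
  let e : ℂ → Fin n → ℂ := fun w j => if j = i₀ then w else 0
  let r : ℤ × (Fin n → ℚ) → ℝ := fun p => 2 * m * (p.2 i₀ : ℝ)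
  have hbr : ∀ (p : ℤ × (Fin n → ℚ)) (w : ℂ), L.bc (fun i => (p.2 i : ℂ)) (e w) = r p * w := by
    intro p w
    rw [hbc]
    simp [e, r]
    ring
  -- the indices with `q`-exponent zero in the support of the coefficients
  let v : Option (Fin n × Bool) → ℤ × (Fin n → ℚ) := fun o => (0, match o with
    | none => 0
    | some (i, true) => fun j => if j = i then (1 : ℚ) / (2 * m) else 0
    | some (i, false) => fun j => if j = i then -(1 : ℚ) / (2 * m) else 0)
  have hv : Function.Injective v := by
    have hpos : (0 : ℚ) < 1 / (2 * m) := by positivity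
    have hnegv : -(1 : ℚ) / (2 * m) < 0 := by rw [neg_div]; linarith
    have hne : (1 : ℚ) / (2 * m) ≠ -1 / (2 * m) := by linarith
    have hneg0 := hnegv.ne
    have hpos0 := hpos.ne'
    rintro (_ | ⟨i, _ | _⟩) (_ | ⟨j, _ | _⟩) h <;>
      simp only [v, Prod.mk.injEq, true_and] at h
    · rfl
    all_goals
      first
        | have h1 := congrFun h i
          simp only [if_true, Pi.zero_apply] at h1
        | have h1 := congrFun h j
          simp only [if_true, Pi.zero_apply] at h1
      grind
  have hsupp : ∀ l, φ.coef 0 l ≠ 0 → (0, l) ∈ Set.range v := by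
    intro l hl
    by_contra hcon
    refine hl (hother l ?_ fun i => ⟨?_, ?_⟩)
    · rintro rfl; exact hcon ⟨none, rfl⟩
    · rintro rfl; exact hcon ⟨some (i, true), rfl⟩
    · rintro rfl; exact hcon ⟨some (i, false), rfl⟩
  have hsum : ∀ u : ℤ × (Fin n → ℚ) → ℂ,
      HasSum (fun p => if p.1 = 0 then φ.coef p.1 p.2 * u p else 0)
        (∑ o, φ.coef 0 (v o).2 * u (v o)) := by
    intro u
    refine (hv.hasSum_iff ?_).mp ?_
    · rintro ⟨k, l⟩ hkl
      split_ifs with hk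
      · simp only at hk
        subst hk
        have : φ.coef 0 l = 0 := by
          by_contra hne
          exact hkl (hsupp l hne)
        simp [this]
      · rfl
    · exact hasSum_fintype _
  have hC := hsum fun _ => 1
  have hD := hsum fun p => (r p : ℂ) ^ 2
  have hb1 : ∀ i, φ.coef 0 (v (some (i, true))).2 = c := fun i => (hbasis i).1
  have hb2 : ∀ i, φ.coef 0 (v (some (i, false))).2 = c := fun i => (hbasis i).2
  have hr0 : r (v none) = 0 := by simp [r, v]
  have hr1 : ∀ i b, (r (v (some (i, b))) : ℂ) ^ 2 = if i = i₀ then 1 else 0 := by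
    intro i b
    by_cases hi : i = i₀
    · cases b <;> simp [r, v, hi] <;> field_simp <;> simp
    · have hi' : i₀ ≠ i := fun h => hi h.symm
      cases b <;> simp [r, v, hi, hi']
  simp only [Fintype.sum_option, Fintype.sum_prod_type, Fintype.sum_bool, hb1, hb2, hr0, hr1,
    mul_one] at hC hD
  have h := q0_identity_one_variable (fun p : ℤ × (Fin n → ℚ) => p.1) r
    (fun p => φ.coef p.1 p.2) m (fun τ w => φ.toFun τ (e w)) ?_ ?_ ?_ _ _ hC hD
  · simp [Finset.sum_add_distrib, v] at h
    linear_combination -h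
  · intro p hp
    by_contra hlt
    exact hp (hneg p.1 (not_le.mp hlt) p.2)
  · intro τ hτ w
    have := φ.expansion τ hτ (e w)
    simpa only [hbr] using this
  · intro τ hτ w
    have h1 := φ.modular 0 (-1) 1 0 (by norm_num) τ hτ (e w)
    have h2 : L.bc (e w) (e w) = 2 * m * w ^ 2 := by
      rw [hbc, Finset.sum_eq_single i₀ (fun j _ hj => by simp [e, hj]) (by simp)]
      simp only [e, if_true]
      ring
    have h3 : (fun i => e w i / τ) = e (w / τ) := by
      funext j
      simp only [e]
      split_ifs <;> simp
    simp only [Int.cast_zero, Int.cast_one, Int.cast_neg, zero_mul, one_mul, zero_add, add_zero,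
      zpow_zero, h2, h3, mul_one] at h1
    rw [h1]
    congr 2
    ring
end
end
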